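/- Let Ψ : (0,∞) → (0,∞) and ω : (0,∞) → (0,1) be such that the maps q ↦ q²Ψ(q) and q ↦ q²Ψ(q)ω(q) are non-increasing on (0,∞), Ψ satisfies the square divisibility condition, Σ_{q=1}^∞ qΨ(q) < ∞ (sum over positive integers q), and lim_{q→∞} ω(q) = 0. Assume also that ω(q) ≥ (45/(16Ψ(q))) · Ψ(1/(8Ψ(q))) for all sufficiently large q. Then dim_H(E(Ψ,ω)) = inf{s ≥ 0 : Σ_{q=1}^∞ q(Ψ(q)ω(q))^s < ∞}. -/

import Mathlib

/-!
*Upper bound.* A point of `E(Ψ, ω)` lies, for infinitely many `p/q`, in the annulus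
`(1 - ω(q))Ψ(q) ≤ |x - p/q| ≤ Ψ(q)`, a union of two intervals of length `Ψ(q)ω(q)`. There are
`O(q)` of these annuli for each `q` in a bounded region, so the `s`-dimensional Hausdorff measure
is finite as soon as `∑ q (Ψ(q)ω(q))^s` converges.

*Lower bound.* The intervals of a Cantor set are the outer halves
`J(r) = [r + (1 - ω(q)/2)Ψ(q), r + Ψ(q)]` of the right parts of the annuli around rationals `r` of
denominator `q`. Inside a given `J(r)` of length `ℓ`, most points `x` are far from all rationals of
the relevant denominators, because `∑ qΨ(q)` converges. About `ℓN²` such points with gaps of order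
`N⁻²` can be selected, and Dirichlet's theorem yields near each of them a rational of denominator
comparable to `N`; the intervals of these rationals are the children of `J(r)`.

The point is that a child `J(r)`, which hugs the end point `r + Ψ(q)`, must itself stay away from
the rationals `r' ≠ r`, of denominator `b` say. If `b ≤ q`, the choice of `x` suffices. If
`b ≥ 1/Ψ(q)`, the lower bound on `ω` makes `Ψ(b)` negligible compared with the length of `J(r)`,
and `r'` is dealt with at a later step. For `q < b < 1/Ψ(q)` the square divisibility condition
enters: `1/Ψ(q) = q²k`, so `r + Ψ(q)` is rational, and an `r'` too close to it produces a mirror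
image, of smaller denominator, too close to `r`.

Since the number of children is of order `ℓN²` and their gaps of order `N⁻²`, the Cantor set has
dimension at least `s` whenever `N²(Ψ(N)ω(N))^s` is unbounded, which is the case for every `s` below
the critical exponent of the series.
-/

open Filter Set

/-- A real number `x` is `Ψ`-approximable: `|x - p/q| ≤ Ψ q` for infinitely many
pairs `(p, q) ∈ ℤ × ℕ` (with `q > 0`).  `WSet Ψ` is the set `W(Ψ)` of such `x`. -/
def WSet (Ψ : ℝ → ℝ) : Set ℝ :=
  {x : ℝ | {pq : ℤ × ℕ | 0 < pq.2 ∧ |x - (pq.1 : ℝ) / (pq.2 : ℝ)| ≤ Ψ (pq.2 : ℝ)}.Infinite}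

/-- `ESet Ψ ω` is the set `E(Ψ, ω)` of `x ∈ W(Ψ)` such that for all sufficiently large
`q ∈ ℕ` one has `|x - p/q| ≥ (1 - ω q) * Ψ q` for every `p ∈ ℤ`. -/
def ESet (Ψ ω : ℝ → ℝ) : Set ℝ :=
  {x : ℝ | x ∈ WSet Ψ ∧ ∃ Q : ℕ, ∀ q : ℕ, Q ≤ q → ∀ p : ℤ,
    (1 - ω (q : ℝ)) * Ψ (q : ℝ) ≤ |x - (p : ℝ) / (q : ℝ)|}

/-- `Ψ` satisfies the *square divisibility condition*: for every positive integer `q`,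
`Ψ(q)⁻¹` is a positive integer divisible by `q²`. -/
def SquareDivisibility (Ψ : ℝ → ℝ) : Prop :=
  ∀ q : ℕ, 0 < q → ∃ k : ℕ, 0 < k ∧ (Ψ (q : ℝ))⁻¹ = (q : ℝ) ^ 2 * (k : ℝ)

open MeasureTheory
open scoped ENNReal NNReal

/-! ### Hausdorff dimension of limsup sets and of Cantor sets -/

theorem dimH_limsup_cofinite_le {X ι : Type*} [EMetricSpace X] [Countable ι] (U : ι → Set X)
    {s : ℝ≥0} (hs : 0 < s) (hU : ∑' i, Metric.ediam (U i) ^ (s : ℝ) ≠ ∞) :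
    dimH (limsup U cofinite) ≤ s := by
  borelize X
  have hs' : (0 : ℝ) < s := hs
  let tail : Finset ι → ℝ≥0∞ := fun F => ∑' i : {i // i ∉ F}, Metric.ediam (U i) ^ (s : ℝ)
  have htail : Tendsto tail atTop (nhds 0) := ENNReal.tendsto_tsum_compl_atTop_zero hU
  have hradius : Tendsto (fun F => tail F ^ (s : ℝ)⁻¹) atTop (nhds 0) := by
    simpa [hs'] using htail.ennrpow_const (s : ℝ)⁻¹
  refine dimH_le_of_hausdorffMeasure_ne_top (ne_top_of_le_ne_top ENNReal.zero_ne_top ?_)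
  refine (Measure.hausdorffMeasure_le_liminf_tsum (s : ℝ) _ _ hradius
    (fun F (i : {i // i ∉ F}) => U i) (.of_forall fun F i => ?_)
    (.of_forall fun F x hx => ?_)).trans htail.liminf_eq.le
  · rw [ENNReal.le_rpow_inv_iff hs']
    exact ENNReal.le_tsum i
  · have hinf : {i | x ∈ U i}.Infinite := by
      rw [← frequently_cofinite_iff_infinite]
      exact mem_limsup_iff_frequently_mem.1 hx
    obtain ⟨i, hi, hiF⟩ := hinf.exists_notMem_finset F
    exact mem_iUnion.2 ⟨⟨i, hiF⟩, hi⟩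

theorem dimH_le_dimH_image_div {X Y : Type*} [EMetricSpace X] [EMetricSpace Y] {C r : ℝ≥0}
    (hr : 0 < r) {f : X → Y} {s : Set X}
    (hf : ∀ x ∈ s, ∀ y ∈ s, edist x y ≤ C * edist (f x) (f y) ^ (r : ℝ)) :
    dimH s ≤ dimH (f '' s) / r := by
  rcases s.eq_empty_or_nonempty with rfl | ⟨x₀, -⟩
  · simp
  have : Nonempty X := ⟨x₀⟩
  have hinj : InjOn f s := fun x hx y hy hxy => by
    simpa [hxy, hr] using hf x hx y hy
  have hleft : LeftInvOn (Function.invFunOn f s) f s := hinj.leftInvOn_invFunOn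
  have hholder : HolderOnWith C r (Function.invFunOn f s) (f '' s) := by
    rintro _ ⟨x, hx, rfl⟩ _ ⟨y, hy, rfl⟩
    simpa [hleft hx, hleft hy] using hf x hx y hy
  simpa [hleft.image_image] using hholder.dimH_image_le hr

theorem le_rpow_mul_rpow_of_le_of_le {x a b s : ℝ} (hx : 0 < x) (ha : x ≤ a) (hb : x ≤ b)
    (hs : 0 ≤ s) (hs1 : s ≤ 1) : x ≤ a ^ (1 - s) * b ^ s := by
  calc x = x ^ (1 - s) * x ^ s := by rw [← Real.rpow_add hx, sub_add_cancel, Real.rpow_one]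
    _ ≤ a ^ (1 - s) * b ^ s :=
        mul_le_mul (Real.rpow_le_rpow hx.le ha (sub_nonneg.2 hs1)) (Real.rpow_le_rpow hx.le hb hs)
          (Real.rpow_nonneg hx.le s) (Real.rpow_nonneg (hx.le.trans ha) _)

/-- A nested family of compact intervals on the line: level `n` consists of the intervals
`[left n k, right n k]` with `k < card n`, and interval `k` of level `n + 1` lies in interval
`k / branching n` of level `n`. Intervals of level `n + 1` with the same parent are in increasing
order, and separated by `gap n` times the difference of their indices. -/
structure IntervalTree where
  card : ℕ → ℕ
  branching : ℕ → ℕ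
  left : ℕ → ℕ → ℝ
  right : ℕ → ℕ → ℝ
  gap : ℕ → ℝ
  card_zero : card 0 = 1
  card_succ : ∀ n, card (n + 1) = card n * branching n
  two_le_branching : ∀ n, 2 ≤ branching n
  left_le_right : ∀ n, ∀ k < card n, left n k ≤ right n k
  nested : ∀ n, ∀ k < card (n + 1), Icc (left (n + 1) k) (right (n + 1) k) ⊆
    Icc (left n (k / branching n)) (right n (k / branching n))
  gap_pos : ∀ n, 0 < gap n
  separated : ∀ n, ∀ j k, j < k → k < card (n + 1) → j / branching n = k / branching n →
    ((k : ℝ) - j) * gap n ≤ left (n + 1) k - right (n + 1) j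

namespace IntervalTree

variable (T : IntervalTree)

/-- The branch `k` picks interval `k n` on level `n`, each one contained in the previous one. -/
def IsBranch (k : ℕ → ℕ) : Prop :=
  ∀ n, k n < T.card n ∧ k (n + 1) / T.branching n = k n

/-- The points lying in all the intervals of some branch. -/
def limitSet : Set ℝ :=
  {x | ∃ k, T.IsBranch k ∧ ∀ n, x ∈ Icc (T.left n (k n)) (T.right n (k n))}

theorem branching_pos (n : ℕ) : 0 < T.branching n :=
  two_pos.trans_le (T.two_le_branching n)

theorem lt_card (n : ℕ) : n < T.card n := by
  induction n with
  | zero => simp [T.card_zero]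
  | succ n ih => rw [T.card_succ]; nlinarith [T.two_le_branching n]

theorem card_pos (n : ℕ) : (0 : ℝ) < T.card n :=
  Nat.cast_pos.2 (pos_of_gt (T.lt_card n))

/-- The index of the interval of level `n` assigned to the parameter `t ∈ [0, 1)`. -/
noncomputable def node (t : ℝ) (n : ℕ) : ℕ :=
  ⌊t * T.card n⌋₊

variable {T} {t t' : ℝ} {n : ℕ}

theorem node_mono (h : t ≤ t') (n : ℕ) : T.node t n ≤ T.node t' n :=
  Nat.floor_mono (by gcongr)

theorem isBranch_node (ht : t ∈ Ico (0 : ℝ) 1) : T.IsBranch (T.node t) := by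
  refine fun n => ⟨(Nat.floor_lt (mul_nonneg ht.1 (T.card_pos n).le)).2 ?_, ?_⟩
  · exact mul_lt_of_lt_one_left (T.card_pos n) ht.2
  · have hb : (T.branching n : ℝ) ≠ 0 := by exact_mod_cast (T.branching_pos n).ne'
    rw [node, ← Nat.floor_div_natCast, T.card_succ, Nat.cast_mul, ← mul_assoc,
      mul_div_cancel_right₀ _ hb, node]

theorem sub_mul_card_lt (ht : 0 ≤ t) (n : ℕ) :
    (t' - t) * T.card n < (T.node t' n : ℝ) - T.node t n + 1 := by
  have h₁ : t' * T.card n < T.node t' n + 1 := Nat.lt_floor_add_one _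
  have h₂ : (T.node t n : ℝ) ≤ t * T.card n := Nat.floor_le (mul_nonneg ht (T.card_pos n).le)
  linarith

theorem exists_forall_mem_Icc_node (ht : t ∈ Ico (0 : ℝ) 1) :
    ∃ x, ∀ n, x ∈ Icc (T.left n (T.node t n)) (T.right n (T.node t n)) := by
  have hbranch := isBranch_node (T := T) ht
  have hanti : Antitone fun n => Icc (T.left n (T.node t n)) (T.right n (T.node t n)) :=
    antitone_nat_of_succ_le fun n => by
      simpa only [(hbranch n).2] using T.nested n _ (hbranch (n + 1)).1
  exact ⟨_, mem_iInter.1 <| ciSup_mem_iInter_Icc_of_antitone_Icc hanti fun n =>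
    T.left_le_right n _ (hbranch n).1⟩

theorem exists_node_eq_and_node_succ_lt (ht : t ∈ Ico (0 : ℝ) 1) (ht' : t' ∈ Ico (0 : ℝ) 1)
    (htt : t < t') :
    ∃ n, T.node t n = T.node t' n ∧ T.node t (n + 1) < T.node t' (n + 1) := by
  by_contra! hnot
  have heq : ∀ n, T.node t n = T.node t' n := fun n => by
    induction n with
    | zero =>
      have h := (isBranch_node (T := T) ht 0).1
      have h' := (isBranch_node (T := T) ht' 0).1
      rw [T.card_zero] at h h'
      lia
    | succ n ih => exact (node_mono htt.le _).antisymm (hnot n ih)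
  obtain ⟨n, hn⟩ := exists_nat_gt (1 / (t' - t))
  have hsub : (t' - t) * T.card n < 1 := by
    simpa [heq n] using sub_mul_card_lt (T := T) (t' := t') ht.1 n
  have hcard : (n : ℝ) < T.card n := mod_cast T.lt_card n
  rw [div_lt_iff₀' (sub_pos.2 htt)] at hn
  nlinarith [mul_lt_mul_of_pos_left hcard (sub_pos.2 htt)]

/-- If `t` and `t'` part at level `n + 1`, `L` intervals away from each other, then `t' - t` is at
most both `1 / card n` and `2 L / card (n + 1)`, and the bound interpolates between the two. -/
theorem sub_le_of_node_eq {s : ℝ} (hs : 0 ≤ s) (hs1 : s ≤ 1) (ht : 0 ≤ t) (htt : t < t')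
    (heq : T.node t n = T.node t' n) (hlt : T.node t (n + 1) < T.node t' (n + 1)) :
    t' - t ≤ (2 * ((T.node t' (n + 1) : ℝ) - T.node t (n + 1)) / T.branching n) ^ s
      / T.card n := by
  set L : ℝ := (T.node t' (n + 1) : ℝ) - T.node t (n + 1)
  have hL : 1 ≤ L := by
    have : (T.node t (n + 1) : ℝ) + 1 ≤ T.node t' (n + 1) := mod_cast hlt
    simp only [L]; linarith
  have hcard := T.card_pos n
  have hcoarse : t' - t ≤ (T.card n : ℝ)⁻¹ := by
    rw [← one_div, le_div_iff₀ hcard]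
    simpa [heq] using (sub_mul_card_lt (T := T) (t' := t') ht n).le
  have hfine : t' - t ≤ (T.card n : ℝ)⁻¹ * (2 * L / T.branching n) := by
    have hb : (0 : ℝ) < T.branching n := by exact_mod_cast T.branching_pos n
    have h := sub_mul_card_lt (T := T) (t' := t') ht (n + 1)
    rw [T.card_succ, Nat.cast_mul, ← mul_assoc] at h
    rw [inv_mul_eq_div, div_div, le_div_iff₀ (by positivity)]
    simp only [L] at hL ⊢
    linarith
  calc t' - t ≤ (T.card n : ℝ)⁻¹ ^ (1 - s) * ((T.card n : ℝ)⁻¹ * (2 * L / T.branching n)) ^ s :=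
        le_rpow_mul_rpow_of_le_of_le (sub_pos.2 htt) hcoarse hfine hs hs1
    _ = (2 * L / T.branching n) ^ s / T.card n := by
        rw [Real.mul_rpow (by positivity) (by positivity), ← mul_assoc,
          ← Real.rpow_add (by positivity), sub_add_cancel, Real.rpow_one, inv_mul_eq_div]

theorem sub_le_mul_abs_sub_rpow {s c x x' : ℝ} (hs : 0 ≤ s) (hs1 : s ≤ 1) (hc : 0 < c)
    (hdim : ∀ n, c ≤ T.card n * (T.branching n * T.gap n) ^ s)
    (ht : t ∈ Ico (0 : ℝ) 1) (ht' : t' ∈ Ico (0 : ℝ) 1) (htt : t < t')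
    (hx : ∀ n, x ∈ Icc (T.left n (T.node t n)) (T.right n (T.node t n)))
    (hx' : ∀ n, x' ∈ Icc (T.left n (T.node t' n)) (T.right n (T.node t' n))) :
    t' - t ≤ 2 ^ s / c * |x' - x| ^ s := by
  obtain ⟨n, heq, hlt⟩ := exists_node_eq_and_node_succ_lt (T := T) ht ht' htt
  have hbound := sub_le_of_node_eq hs hs1 ht.1 htt heq hlt
  set L : ℝ := (T.node t' (n + 1) : ℝ) - T.node t (n + 1)
  have hL : 0 ≤ L := sub_nonneg.2 (mod_cast hlt.le)
  have hgap := T.gap_pos n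
  have hcard := T.card_pos n
  have hsep : L * T.gap n ≤ |x' - x| := by
    have hbranch := isBranch_node (T := T) ht
    have hbranch' := isBranch_node (T := T) ht'
    have := T.separated n _ _ hlt (hbranch' _).1 (by rw [(hbranch n).2, (hbranch' n).2, heq])
    linarith [(hx (n + 1)).2, (hx' (n + 1)).1, le_abs_self (x' - x)]
  have hb : (0 : ℝ) < T.branching n := by exact_mod_cast T.branching_pos n
  calc t' - t ≤ (2 * L / T.branching n) ^ s / T.card n := hbound
    _ = 2 ^ s / (T.card n * (T.branching n * T.gap n) ^ s) * (L * T.gap n) ^ s := by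
        have : 2 * L / T.branching n = 2 * (L * T.gap n) / (T.branching n * T.gap n) := by
          field_simp
        rw [this, Real.div_rpow (by positivity) (by positivity),
          Real.mul_rpow (by positivity) (by positivity)]
        field_simp
    _ ≤ 2 ^ s / c * |x' - x| ^ s := by gcongr; exact hdim n

theorem le_dimH_limitSet {s c : ℝ} (hs : 0 < s) (hs1 : s ≤ 1) (hc : 0 < c)
    (hdim : ∀ n, c ≤ T.card n * (T.branching n * T.gap n) ^ s) :
    ENNReal.ofReal s ≤ dimH T.limitSet := by
  choose! f hf using fun t ht => exists_forall_mem_Icc_node (T := T) (t := t) ht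
  have hmem : f '' Ico 0 1 ⊆ T.limitSet := by
    rintro _ ⟨t, ht, rfl⟩
    exact ⟨T.node t, isBranch_node ht, hf t ht⟩
  have hexpand : ∀ t ∈ Ico (0 : ℝ) 1, ∀ t' ∈ Ico (0 : ℝ) 1,
      |t - t'| ≤ 2 ^ s / c * |f t - f t'| ^ s := by
    intro t ht t' ht'
    wlog h : t ≤ t' generalizing t t'
    · rw [abs_sub_comm, abs_sub_comm (f t)]
      exact this t' ht' t ht (le_of_not_ge h)
    rcases h.eq_or_lt with rfl | h
    · simp [Real.zero_rpow hs.ne']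
    rw [abs_sub_comm, abs_of_pos (sub_pos.2 h), abs_sub_comm (f t)]
    exact sub_le_mul_abs_sub_rpow hs.le hs1 hc hdim ht ht' h (hf t ht) (hf t' ht')
  have hdimH := dimH_le_dimH_image_div (C := (2 ^ s / c).toNNReal) (r := s.toNNReal)
    (f := f) (s := Ico 0 1) (by simpa using hs) fun t ht t' ht' => by
      rw [edist_dist, edist_dist, Real.dist_eq, Real.dist_eq, Real.coe_toNNReal _ hs.le,
        ENNReal.ofReal_rpow_of_nonneg (abs_nonneg _) hs.le]
      change _ ≤ ENNReal.ofReal _ * _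
      rw [← ENNReal.ofReal_mul (by positivity)]
      exact ENNReal.ofReal_le_ofReal (hexpand t ht t' ht')
  rw [Real.dimH_of_nonempty_interior (by simp), Module.finrank_self, Nat.cast_one,
    ENNReal.le_div_iff_mul_le (by simp [hs]) (by simp), one_mul] at hdimH
  exact hdimH.trans (dimH_mono hmem)

end IntervalTree

section Splitting

variable {ι : Type*} {left right : ι → ℝ} {Child : ι → ι → Prop}

/-- Each interval `[left i, right i]` with `i ∈ F` contains the `m` intervals of indices
`child i 0, …, child i (m - 1)`, which have length at least `ℓ`, are in increasing order and are
separated by `gap` times the difference of their numbers. -/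
structure IsSplitting (left right : ι → ℝ) (Child : ι → ι → Prop) (F : Set ι) (m : ℕ)
    (gap ℓ : ℝ) (child : ι → ℕ → ι) : Prop where
  two_le : 2 ≤ m
  gap_pos : 0 < gap
  length_pos : 0 < ℓ
  isChild : ∀ i ∈ F, ∀ j < m, Child i (child i j)
  nested : ∀ i ∈ F, ∀ j < m, Icc (left (child i j)) (right (child i j)) ⊆ Icc (left i) (right i)
  length_le : ∀ i ∈ F, ∀ j < m, ℓ ≤ right (child i j) - left (child i j)
  separated : ∀ i ∈ F, ∀ j k, j < k → k < m →
    ((k : ℝ) - j) * gap ≤ left (child i k) - right (child i j)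

/-- One level of the construction of an interval tree: `card` intervals of length at least
`length`, with a lower bound `mass` on the sum of the `s`-th powers of their lengths. -/
structure IntervalLevel (left right : ι → ℝ) (s mass : ℝ) where
  card : ℕ
  node : ℕ → ι
  length : ℝ
  length_pos : 0 < length
  length_le : ∀ k < card, length ≤ right (node k) - left (node k)
  mass_le : mass ≤ card * length ^ s

namespace IntervalLevel

variable {s mass : ℝ}

/-- `S'` arises from `S` by splitting each interval into `m` intervals, numbered consecutively. -/
structure Refines (Child : ι → ι → Prop) (S S' : IntervalLevel left right s mass) (m : ℕ)
    (gap : ℝ) : Prop where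
  card_eq : S'.card = S.card * m
  two_le : 2 ≤ m
  gap_pos : 0 < gap
  isChild : ∀ k < S'.card, Child (S.node (k / m)) (S'.node k)
  nested : ∀ k < S'.card, Icc (left (S'.node k)) (right (S'.node k)) ⊆
    Icc (left (S.node (k / m))) (right (S.node (k / m)))
  separated : ∀ j k, j < k → k < S'.card → j / m = k / m →
    ((k : ℝ) - j) * gap ≤ left (S'.node k) - right (S'.node j)

theorem exists_refines (S : IntervalLevel left right s mass) {m : ℕ} {gap ℓ : ℝ} {child : ι → ℕ → ι}
    (h : IsSplitting left right Child (S.node '' Iio S.card) m gap ℓ child)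
    (hmass : S.length ^ s ≤ m * ℓ ^ s) :
    ∃ S' : IntervalLevel left right s mass, S.Refines Child S' m gap := by
  have hm : 0 < m := two_pos.trans_le h.two_le
  have hmem : ∀ k < S.card * m, S.node (k / m) ∈ S.node '' Iio S.card := fun k hk =>
    mem_image_of_mem _ (Nat.div_lt_of_lt_mul (by rwa [mul_comm]))
  have hmod : ∀ k, k % m < m := fun k => Nat.mod_lt k hm
  refine ⟨⟨S.card * m, fun k => child (S.node (k / m)) (k % m), ℓ, h.length_pos,
    fun k hk => h.length_le _ (hmem k hk) _ (hmod k), ?_⟩, rfl, h.two_le, h.gap_pos,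
    fun k hk => h.isChild _ (hmem k hk) _ (hmod k),
    fun k hk => h.nested _ (hmem k hk) _ (hmod k), fun j k hjk hk hdiv => ?_⟩
  · calc mass ≤ S.card * S.length ^ s := S.mass_le
      _ ≤ S.card * (m * ℓ ^ s) := by gcongr
      _ = ↑(S.card * m) * ℓ ^ s := by push_cast; ring
  · have hj := Nat.div_add_mod j m
    have hk' := Nat.div_add_mod k m
    rw [hdiv] at hj
    have hdiff : (k : ℝ) - j = ((k % m : ℕ) : ℝ) - (j % m : ℕ) := by
      rw [sub_eq_sub_iff_add_eq_add]
      exact_mod_cast (by lia : k + j % m = k % m + j)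
    simp only [hdiv, hdiff]
    exact h.separated _ (hmem k hk) _ _ (by lia) (hmod k)

/-- The interval tree whose levels are those of a sequence of successive refinements. -/
def tree (S : ℕ → IntervalLevel left right s mass) (m : ℕ → ℕ) (gap : ℕ → ℝ)
    (hS₀ : (S 0).card = 1) (hS : ∀ n, (S n).Refines Child (S (n + 1)) (m n) (gap n)) :
    IntervalTree where
  card n := (S n).card
  branching := m
  left n k := left ((S n).node k)
  right n k := right ((S n).node k)
  gap := gap
  card_zero := hS₀
  card_succ n := (hS n).card_eq
  two_le_branching n := (hS n).two_le
  left_le_right n k hk := sub_nonneg.1 ((S n).length_pos.le.trans ((S n).length_le k hk))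
  nested n := (hS n).nested
  gap_pos n := (hS n).gap_pos
  separated n := (hS n).separated

end IntervalLevel

/-- Iterated splitting yields a set of dimension at least `s`, provided that the gaps are
comparable to the lengths of the intervals being split divided by the number of pieces, and that
splitting does not decrease the sum of the `s`-th powers of the lengths. -/
theorem le_dimH_of_splitting {K : Set ℝ} {i₀ : ι} {s c : ℝ} (hs : 0 < s) (hs1 : s ≤ 1)
    (hc : 0 < c) (hi₀ : left i₀ < right i₀)
    (hsplit : ∀ F : Set ι, F.Finite → ∀ ℓ > 0, (∀ i ∈ F, ℓ ≤ right i - left i) →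
      ∃ m gap ℓ' child, IsSplitting left right Child F m gap ℓ' child ∧ c * ℓ ≤ m * gap ∧
        ℓ ^ s ≤ m * ℓ' ^ s)
    (hK : ∀ (i : ℕ → ι) (x : ℝ), i 0 = i₀ → (∀ n, Child (i n) (i (n + 1))) →
      (∀ n, x ∈ Icc (left (i n)) (right (i n))) → x ∈ K) :
    ENNReal.ofReal s ≤ dimH K := by
  let mass := (right i₀ - left i₀) ^ s
  have hstep (S : IntervalLevel left right s mass) :
      ∃ (S' : IntervalLevel left right s mass) (m : ℕ) (gap : ℝ), S.Refines Child S' m gap ∧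
        c * S.length ≤ m * gap := by
    obtain ⟨m, gap, ℓ', child, h, hgap, hmass⟩ := hsplit (S.node '' Iio S.card)
      ((finite_Iio _).image _) S.length S.length_pos (forall_mem_image.2 S.length_le)
    obtain ⟨S', hS'⟩ := S.exists_refines h hmass
    exact ⟨S', m, gap, hS', hgap⟩
  choose next m gap hnext hgap using hstep
  let S : ℕ → IntervalLevel left right s mass := fun n => next^[n]
    ⟨1, fun _ => i₀, right i₀ - left i₀, sub_pos.2 hi₀, fun _ _ => le_rfl, by simp [mass]⟩
  have hS (n : ℕ) : (S n).Refines Child (S (n + 1)) (m (S n)) (gap (S n)) := by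
    simp only [S, Function.iterate_succ_apply']
    exact hnext _
  let T : IntervalTree :=
    IntervalLevel.tree S (fun n => m (S n)) (fun n => gap (S n)) rfl hS
  have hlimit : T.limitSet ⊆ K := by
    rintro x ⟨k, hk, hx⟩
    refine hK (fun n => (S n).node (k n)) x rfl (fun n => ?_) hx
    simpa only [show k (n + 1) / m (S n) = k n from (hk n).2] using (hS n).isChild _ (hk (n + 1)).1
  refine (T.le_dimH_limitSet (c := c ^ s * mass) hs hs1
    (mul_pos (Real.rpow_pos_of_pos hc s) (Real.rpow_pos_of_pos (sub_pos.2 hi₀) s))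
    fun n => ?_).trans (dimH_mono hlimit)
  have hlength := (S n).length_pos
  calc c ^ s * mass ≤ c ^ s * ((S n).card * (S n).length ^ s) := by
        gcongr; exact (S n).mass_le
    _ = (S n).card * (c * (S n).length) ^ s := by
        rw [Real.mul_rpow hc.le hlength.le]; ring
    _ ≤ (S n).card * (m (S n) * gap (S n)) ^ s :=
        mul_le_mul_of_nonneg_left (Real.rpow_le_rpow (by positivity) (hgap (S n)) hs.le)
          (Nat.cast_nonneg _)

end Splitting

/-! ### Measure of neighbourhoods of separated sets -/

theorem finite_and_ncard_le_of_pairwise {S : Set ℝ} {σ a b : ℝ} (hσ : 0 < σ) (hab : a ≤ b)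
    (hS : S.Pairwise fun x y => σ ≤ |x - y|) (hSab : S ⊆ Icc a b) :
    S.Finite ∧ (S.ncard : ℝ) ≤ (b - a) / σ + 1 := by
  let f : ℝ → ℕ := fun x => ⌊(x - a) / σ⌋₊
  have hmaps : MapsTo f S (Iic ⌊(b - a) / σ⌋₊) := fun x hx =>
    Nat.floor_mono (by gcongr; exact (hSab hx).2)
  have hinj : InjOn f S := by
    intro x hx y hy hxy
    by_contra hne
    have habs : |(x - a) / σ - (y - a) / σ| < 1 := by
      have hfloor : ⌊(x - a) / σ⌋₊ = ⌊(y - a) / σ⌋₊ := hxy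
      have hx₁ := Nat.lt_floor_add_one ((x - a) / σ)
      have hy₁ := Nat.lt_floor_add_one ((y - a) / σ)
      have hx₂ := Nat.floor_le (div_nonneg (sub_nonneg.2 (hSab hx).1) hσ.le)
      have hy₂ := Nat.floor_le (div_nonneg (sub_nonneg.2 (hSab hy).1) hσ.le)
      rw [hfloor] at hx₁ hx₂
      rw [abs_lt]
      constructor <;> linarith
    rw [← sub_div, sub_sub_sub_cancel_right, abs_div, abs_of_pos hσ, div_lt_one hσ] at habs
    exact absurd (hS hx hy hne) habs.not_ge
  refine ⟨.of_injOn hmaps hinj (finite_Iic _), ?_⟩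
  have hcard : S.ncard ≤ ⌊(b - a) / σ⌋₊ + 1 := by
    simpa [ncard_eq_toFinset_card'] using ncard_le_ncard_of_injOn f hmaps hinj (finite_Iic _)
  calc (S.ncard : ℝ) ≤ ⌊(b - a) / σ⌋₊ + 1 := mod_cast hcard
    _ ≤ (b - a) / σ + 1 := by
        gcongr; exact Nat.floor_le (div_nonneg (sub_nonneg.2 hab) hσ.le)

theorem volume_thickening_inter_Icc_le {S : Set ℝ} {σ ρ u v : ℝ} (hσ : 0 < σ) (hρ : 0 ≤ ρ)
    (huv : u ≤ v) (hS : S.Pairwise fun x y => σ ≤ |x - y|) :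
    volume (Metric.thickening ρ S ∩ Icc u v) ≤
      ENNReal.ofReal (((v - u + 2 * ρ) / σ + 1) * (2 * ρ)) := by
  obtain ⟨hfin, hcard⟩ := finite_and_ncard_le_of_pairwise (a := u - ρ) (b := v + ρ) hσ
    (by linarith) (hS.mono inter_subset_left) inter_subset_right
  have hcover : Metric.thickening ρ S ∩ Icc u v ⊆ ⋃ a ∈ hfin.toFinset, Metric.ball a ρ := by
    rintro x ⟨hx, hxuv⟩
    obtain ⟨a, ha, hxa⟩ := Metric.mem_thickening_iff.1 hx
    have hxa' := abs_lt.1 (Real.dist_eq x a ▸ hxa)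
    refine mem_biUnion (hfin.mem_toFinset.2 ⟨ha, ?_, ?_⟩) hxa
    · linarith [hxuv.1]
    · linarith [hxuv.2]
  calc volume (Metric.thickening ρ S ∩ Icc u v)
      ≤ ∑ a ∈ hfin.toFinset, volume (Metric.ball a ρ) :=
        (measure_mono hcover).trans (measure_biUnion_finset_le _ _)
    _ = ENNReal.ofReal ((S ∩ Icc (u - ρ) (v + ρ)).ncard * (2 * ρ)) := by
        simp only [Real.volume_ball, Finset.sum_const, nsmul_eq_mul]
        rw [← ncard_eq_toFinset_card _ hfin, ENNReal.ofReal_mul (Nat.cast_nonneg _),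
          ENNReal.ofReal_natCast]
    _ ≤ ENNReal.ofReal (((v - u + 2 * ρ) / σ + 1) * (2 * ρ)) := by
        have : v - u + 2 * ρ = v + ρ - (u - ρ) := by ring
        rw [this]
        gcongr

theorem add_sub_mul_le_of_forall_add_le {x : ℕ → ℝ} {h : ℝ} {m : ℕ}
    (hx : ∀ i, i + 1 < m → x i + h ≤ x (i + 1)) {i j : ℕ} (hij : i ≤ j) (hj : j < m) :
    x i + ((j : ℝ) - i) * h ≤ x j := by
  induction j, hij using Nat.le_induction with
  | base => simp
  | succ j _ ih =>
    have := ih (by lia)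
    push_cast
    linarith [hx j hj]

/-- Take a point of `A` close to the infimum, discard an interval of length `2 * h`, and repeat. -/
theorem exists_forall_mem_and_add_le {h : ℝ} (hh : 0 < h) (m : ℕ) {A : Set ℝ} (hA : BddBelow A)
    (hvol : ENNReal.ofReal (m * (2 * h)) < volume A) :
    ∃ x : ℕ → ℝ, (∀ i < m, x i ∈ A) ∧ ∀ i, i + 1 < m → x i + h ≤ x (i + 1) := by
  induction m generalizing A with
  | zero => exact ⟨fun _ => 0, by simp, by simp⟩
  | succ m ih =>
    have hne : A.Nonempty := nonempty_of_measure_ne_zero (ne_bot_of_gt hvol)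
    obtain ⟨x₀, hx₀, hlt⟩ := exists_lt_of_csInf_lt hne (lt_add_of_pos_right (sInf A) hh)
    have hcover : A ⊆ A ∩ Ici (x₀ + h) ∪ Icc (sInf A) (sInf A + 2 * h) := fun y hy => by
      rcases le_total (x₀ + h) y with hy' | hy'
      · exact .inl ⟨hy, hy'⟩
      · exact .inr ⟨csInf_le hA hy, by linarith⟩
    have hrest : ENNReal.ofReal (m * (2 * h)) < volume (A ∩ Ici (x₀ + h)) := by
      refine lt_of_add_lt_add_right (a := ENNReal.ofReal (2 * h)) ?_
      calc ENNReal.ofReal (m * (2 * h)) + ENNReal.ofReal (2 * h)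
          = ENNReal.ofReal ((m + 1 : ℕ) * (2 * h)) := by
            rw [← ENNReal.ofReal_add (by positivity) (by positivity)]
            push_cast; ring_nf
        _ < volume A := hvol
        _ ≤ volume (A ∩ Ici (x₀ + h)) + volume (Icc (sInf A) (sInf A + 2 * h)) :=
            (measure_mono hcover).trans (measure_union_le _ _)
        _ = volume (A ∩ Ici (x₀ + h)) + ENNReal.ofReal (2 * h) := by
            rw [Real.volume_Icc, add_sub_cancel_left]
    obtain ⟨x, hx, hstep⟩ := ih (hA.mono inter_subset_left) hrest
    refine ⟨fun i => Nat.casesOn i x₀ x, ?_, ?_⟩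
    · rintro (_ | i) hi
      · exact hx₀
      · exact (hx i (Nat.lt_of_succ_lt_succ hi)).1
    · rintro (_ | i) hi
      · exact (hx 0 (Nat.lt_of_succ_lt_succ hi)).2
      · exact hstep i (Nat.lt_of_succ_lt_succ hi)

theorem volume_iUnion_le_ofReal_of_sum_le {s : ℕ → Set ℝ} {a : ℕ → ℝ} {C : ℝ}
    (hs : ∀ n, volume (s n) ≤ ENNReal.ofReal (a n)) (ha : ∀ n, 0 ≤ a n)
    (hC : ∀ n, ∑ i ∈ Finset.range n, a i ≤ C) : volume (⋃ n, s n) ≤ ENNReal.ofReal C :=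
  calc volume (⋃ n, s n) ≤ ∑' n, volume (s n) := measure_iUnion_le s
    _ ≤ ∑' n, ENNReal.ofReal (a n) := ENNReal.tsum_le_tsum hs
    _ ≤ ENNReal.ofReal C := ENNReal.tsum_le_of_sum_range_le fun n => by
        rw [← ENNReal.ofReal_sum_of_nonneg fun i _ => ha i]
        exact ENNReal.ofReal_le_ofReal (hC n)

/-! ### Rational numbers and mirror images -/

theorem one_div_den_mul_den_le_abs_sub {r r' : ℚ} (h : r ≠ r') :
    1 / ((r.den : ℝ) * r'.den) ≤ |(r : ℝ) - r'| := by
  have hnum : (1 : ℤ) ≤ |r.num * r'.den - r'.num * r.den| :=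
    Int.one_le_abs (sub_ne_zero.2 fun hcross => h (Rat.eq_iff_mul_eq_mul.2 hcross))
  have hden : (0 : ℝ) < r.den := mod_cast r.den_pos
  have hden' : (0 : ℝ) < r'.den := mod_cast r'.den_pos
  have hcross : ((r : ℝ) - r') * (r.den * r'.den) = r.num * r'.den - r'.num * r.den := by
    rw [Rat.cast_def r, Rat.cast_def r']
    field_simp
  rw [div_le_iff₀ (by positivity), ← abs_of_pos (mul_pos hden hden'), ← abs_mul, hcross]
  exact_mod_cast hnum

theorem pairwise_image_ratCast_den_lt (n : ℕ) :
    ((↑) '' {r : ℚ | r.den < n} : Set ℝ).Pairwise fun x y => 1 / (n : ℝ) ^ 2 ≤ |x - y| := by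
  rintro _ ⟨r, hr : r.den < n, rfl⟩ _ ⟨r', hr' : r'.den < n, rfl⟩ hne
  have hden : (0 : ℝ) < r.den := mod_cast r.den_pos
  have hden' : (0 : ℝ) < r'.den := mod_cast r'.den_pos
  calc 1 / (n : ℝ) ^ 2 ≤ 1 / ((r.den : ℝ) * r'.den) :=
        one_div_le_one_div_of_le (mul_pos hden hden') (by rw [pow_two]; gcongr)
    _ ≤ |(r : ℝ) - r'| := one_div_den_mul_den_le_abs_sub fun h => hne (congrArg _ h)

theorem pairwise_range_intCast_div (n : ℕ) :
    (range fun p : ℤ => (p : ℝ) / n).Pairwise fun x y => 1 / (n : ℝ) ≤ |x - y| := by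
  rintro _ ⟨p, rfl⟩ _ ⟨p', rfl⟩ hne
  have hpp : (1 : ℤ) ≤ |p - p'| := Int.one_le_abs (sub_ne_zero.2 fun h => hne (by rw [h]))
  rw [← sub_div, abs_div, Nat.abs_cast]
  gcongr
  exact_mod_cast hpp

theorem sub_mul_mul_ne_zero_of_lt {a b p q k : ℤ} (hb : 0 < b) (hlt : b < q ^ 2 * k) :
    b - (a * q - b * p) * q * k ≠ 0 := fun h => by
  have hdvd : q ^ 2 * k ∣ b :=
    ⟨a - (a * q - b * p) * k * p, by linear_combination (1 - q * k * p) * h⟩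
  exact (Int.le_of_dvd hb hdvd).not_gt hlt

/-- With `d = b q (r' - r)` and `k = Q / q ^ 2`, where `q` and `b` are the denominators of `r` and
`r'`, the mirror image is `r + d / (q C)` for `C = b - d q k`. The numerator of `r + 1 / Q - r'`
over the denominator `b Q` is `C`, because `q ^ 2 ∣ Q`. -/
theorem exists_mirror_eq {r r' : ℚ} {Q : ℕ} (hne : r' ≠ r) (hQ : r.den ^ 2 ∣ Q)
    (hlt : r'.den < Q) :
    ∃ (C : ℤ) (t : ℚ), C ≠ 0 ∧ t ≠ r ∧ t.den ≤ C.natAbs ∧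
      r + 1 / Q - r' = C / (r'.den * Q) ∧ r - t = (C - r'.den) / (Q * C) := by
  obtain ⟨k, hk⟩ := hQ
  set p := r.num
  set q := r.den
  set a := r'.num
  set b := r'.den
  have hQ₀ : (0 : ℚ) < Q := mod_cast pos_of_gt hlt
  have hq₀ : (q : ℚ) ≠ 0 := mod_cast r.den_ne_zero
  have hb₀ : (b : ℚ) ≠ 0 := mod_cast r'.den_ne_zero
  have hr : r * q = p := Rat.mul_den_eq_num r
  have hr' : r' * b = a := Rat.mul_den_eq_num r'
  have hQk : (Q : ℚ) = q ^ 2 * k := mod_cast hk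
  let d : ℤ := a * q - b * p
  let C : ℤ := b - d * q * k
  let e : ℤ := a - d * k * p
  have hC : C ≠ 0 :=
    sub_mul_mul_ne_zero_of_lt (mod_cast r'.den_pos) (by rw [hk] at hlt; exact_mod_cast hlt)
  have hC₀ : (C : ℚ) ≠ 0 := mod_cast hC
  have hd : (d : ℚ) = b * q * (r' - r) := by
    simp only [d]; push_cast; linear_combination b * hr - q * hr'
  have hCd : (C : ℚ) = b - d * q * k := by simp only [C]; push_cast; ring
  have he : (q : ℚ) * e = C * (r * q) + d := by
    rw [hr]; simp only [C, e, d]; push_cast; ring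
  refine ⟨C, e / C, hC, fun ht => hne ?_, ?_, ?_, ?_⟩
  · rw [div_eq_iff hC₀] at ht
    have hd0 : (b : ℚ) * q * (r' - r) = 0 := by rw [← hd]; linear_combination q * ht - he
    simpa [hq₀, hb₀, sub_eq_zero] using hd0
  · rw [← Rat.divInt_eq_div]
    exact Nat.le_of_dvd (Int.natAbs_pos.2 hC) (Int.natCast_dvd.1 (Rat.den_dvd e C))
  · rw [eq_div_iff (by positivity)]
    linear_combination -hCd + q * k * hd + b * (r - r') * hQk + b * one_div_mul_cancel hQ₀.ne'
  · rw [eq_div_iff (by positivity), hQk]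
    field_simp
    linear_combination -hCd - k * q * he

theorem exists_mirror {r r' : ℚ} {Q : ℕ} (hne : r' ≠ r) (hQ : r.den ^ 2 ∣ Q) (hlt : r'.den < Q) :
    ∃ (X : ℕ) (t : ℚ), 0 < X ∧ t ≠ r ∧ t.den ≤ X ∧
      |(r : ℝ) + 1 / Q - r'| = X / (r'.den * Q) ∧
      |(r : ℝ) - t| ≤ (r'.den + X) / (Q * X) := by
  obtain ⟨C, t, hC, htr, hden, hdist, hdist'⟩ := exists_mirror_eq hne hQ hlt
  have hQ₀ : (0 : ℚ) < Q := mod_cast pos_of_gt hlt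
  have hb₀ : (0 : ℚ) < r'.den := mod_cast r'.den_pos
  refine ⟨C.natAbs, t, Int.natAbs_pos.2 hC, htr, hden, ?_, ?_⟩
  · have h : |r + 1 / Q - r'| = C.natAbs / (r'.den * Q) := by
      rw [hdist, abs_div, Nat.cast_natAbs, Int.cast_abs, abs_of_pos (mul_pos hb₀ hQ₀)]
    simpa using congrArg ((↑) : ℚ → ℝ) h
  · suffices h : |r - t| ≤ (r'.den + C.natAbs) / (Q * C.natAbs) by
      simpa using (Rat.cast_le (K := ℝ)).2 h
    rw [hdist', abs_div, abs_mul, abs_of_pos hQ₀, Nat.cast_natAbs, Int.cast_abs]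
    gcongr
    calc |(C : ℚ) - r'.den| ≤ |(C : ℚ)| + |(r'.den : ℚ)| := abs_sub _ _
      _ = r'.den + |(C : ℚ)| := by rw [abs_of_pos hb₀, add_comm]

/-! ### Quadratically decaying approximation functions -/

/-- The approximation functions of the theorem, restricted to the positive integers: `ψ` is positive
and `q ^ 2 * ψ q` is nonincreasing. -/
structure QuadraticDecay (ψ : ℕ → ℝ) : Prop where
  pos : ∀ q, 0 < q → 0 < ψ q
  sq_mul_le : ∀ a b : ℕ, 0 < a → a ≤ b → (b : ℝ) ^ 2 * ψ b ≤ (a : ℝ) ^ 2 * ψ a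

namespace QuadraticDecay

variable {ψ : ℕ → ℝ} (hψ : QuadraticDecay ψ)
include hψ

theorem mul_le {a b : ℕ} (ha : 0 < a) (hab : a ≤ b) : (b : ℝ) * ψ b ≤ a * ψ a := by
  have hb : 0 < ψ b := hψ.pos b (ha.trans_le hab)
  have ha' : (0 : ℝ) < a := mod_cast ha
  refine le_of_mul_le_mul_left ?_ ha'
  calc (a : ℝ) * (b * ψ b) ≤ b * (b * ψ b) := by gcongr
    _ = (b : ℝ) ^ 2 * ψ b := by ring
    _ ≤ (a : ℝ) ^ 2 * ψ a := hψ.sq_mul_le a b ha hab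
    _ = a * (a * ψ a) := by ring

theorem le {a b : ℕ} (ha : 0 < a) (hab : a ≤ b) : ψ b ≤ ψ a := by
  have hb : 0 < ψ b := hψ.pos b (ha.trans_le hab)
  have ha' : (0 : ℝ) < a := mod_cast ha
  refine le_of_mul_le_mul_left ?_ ha'
  calc (a : ℝ) * ψ b ≤ b * ψ b := by gcongr
    _ ≤ a * ψ a := hψ.mul_le ha hab

theorem apply_mul_le {t b : ℕ} (ht : 0 < t) (hb : 0 < b) : (t : ℝ) ^ 2 * ψ (t * b) ≤ ψ b := by
  have hb' : (0 : ℝ) < (b : ℝ) ^ 2 := by positivity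
  refine le_of_mul_le_mul_left ?_ hb'
  calc (b : ℝ) ^ 2 * (t ^ 2 * ψ (t * b)) = ((t * b : ℕ) : ℝ) ^ 2 * ψ (t * b) := by
        push_cast; ring
    _ ≤ (b : ℝ) ^ 2 * ψ b := hψ.sq_mul_le b (t * b) hb (Nat.le_mul_of_pos_left b ht)

theorem apply_two_pow_mul_le {b : ℕ} (hb : 0 < b) (j : ℕ) :
    ψ (2 ^ j * b) ≤ (1 / 4) ^ j * ψ b := by
  have h := hψ.apply_mul_le (pow_pos two_pos j) hb
  have hpow : ((2 ^ j : ℕ) : ℝ) ^ 2 = 4 ^ j := by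
    push_cast
    rw [← pow_mul, mul_comm, pow_mul]
    norm_num
  rw [hpow] at h
  rwa [one_div, inv_pow, inv_mul_eq_div, le_div_iff₀' (by positivity)]

theorem summable_sq_mul_two_pow (hsum : Summable fun q : ℕ => (q : ℝ) * ψ q) :
    Summable fun k : ℕ => ((2 ^ k : ℕ) : ℝ) ^ 2 * ψ (2 ^ k) := by
  have hnonneg (n : ℕ) : 0 ≤ (n : ℝ) * ψ n := by
    rcases n.eq_zero_or_pos with rfl | hn
    · simp
    · exact mul_nonneg n.cast_nonneg (hψ.pos n hn).le
  refine ((summable_condensed_iff_of_nonneg hnonneg fun _ _ ha hab => hψ.mul_le ha hab).2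
    hsum).congr fun k => ?_
  push_cast
  ring

theorem exists_forall_sum_dyadic_le (hsum : Summable fun q : ℕ => (q : ℝ) * ψ q) {η : ℝ}
    (hη : 0 < η) : ∃ B : ℕ, ∀ b ≥ B, ∀ n,
      ∑ j ∈ Finset.range n, ((2 ^ j * b : ℕ) : ℝ) ^ 2 * ψ (2 ^ j * b) ≤ η := by
  obtain ⟨i, hi⟩ := ((tendsto_sum_nat_add fun k => ((2 ^ k : ℕ) : ℝ) ^ 2 * ψ (2 ^ k)).eventually
    (gt_mem_nhds hη)).exists
  refine ⟨2 ^ i, fun b hb n => ?_⟩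
  calc ∑ j ∈ Finset.range n, ((2 ^ j * b : ℕ) : ℝ) ^ 2 * ψ (2 ^ j * b)
      ≤ ∑ j ∈ Finset.range n, ((2 ^ (j + i) : ℕ) : ℝ) ^ 2 * ψ (2 ^ (j + i)) :=
        Finset.sum_le_sum fun j _ => hψ.sq_mul_le _ _ (by positivity) (by rw [pow_add]; gcongr)
    _ ≤ ∑' j, ((2 ^ (j + i) : ℕ) : ℝ) ^ 2 * ψ (2 ^ (j + i)) :=
        ((summable_nat_add_iff i).2 (hψ.summable_sq_mul_two_pow hsum)).sum_le_tsum _ fun j _ =>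
          mul_nonneg (sq_nonneg _) (hψ.pos _ (by positivity)).le
    _ ≤ η := hi.le

theorem tendsto_sq_mul (hsum : Summable fun q : ℕ => (q : ℝ) * ψ q) :
    Tendsto (fun q : ℕ => (q : ℝ) ^ 2 * ψ q) atTop (nhds 0) := by
  refine tendsto_order.2 ⟨fun η hη => ?_, fun η hη => ?_⟩
  · filter_upwards [eventually_gt_atTop 0] with q hq
    exact hη.trans_le (mul_nonneg (sq_nonneg _) (hψ.pos q hq).le)
  · obtain ⟨B, hB⟩ := hψ.exists_forall_sum_dyadic_le hsum (half_pos hη)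
    filter_upwards [eventually_ge_atTop B] with q hq
    have hq := hB q hq 1
    simp only [Finset.sum_range_one, pow_zero, one_mul] at hq
    linarith

theorem tendsto_zero (hsum : Summable fun q : ℕ => (q : ℝ) * ψ q) :
    Tendsto ψ atTop (nhds 0) := by
  refine squeeze_zero' ?_ ?_ (hψ.tendsto_sq_mul hsum) <;>
    filter_upwards [eventually_gt_atTop 0] with q hq
  · exact (hψ.pos q hq).le
  · exact le_mul_of_one_le_left (hψ.pos q hq).le (one_le_pow₀ (mod_cast hq))

theorem sq_mul_le_sq_mul_max {b c X : ℕ} (hX : 0 < X) (hXb : X ≤ b)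
    (hc : (b : ℝ) ^ 2 * ψ b ≤ ψ c) : (b : ℝ) ^ 2 * ψ b ≤ X ^ 2 * ψ (max X c) := by
  rcases le_total c X with hcX | hcX
  · rw [max_eq_left hcX]
    exact hψ.sq_mul_le X b hX hXb
  · rw [max_eq_right hcX]
    have hc₀ : 0 ≤ ψ c := (mul_nonneg (sq_nonneg _) (hψ.pos b (hX.trans_le hXb)).le).trans hc
    exact hc.trans (le_mul_of_one_le_left hc₀ (one_le_pow₀ (mod_cast hX)))

end QuadraticDecay

theorem le_abs_add_sub_of_mul_sq_le {r r' : ℚ} {δ κ : ℝ} (hne : r' ≠ r) (hle : r.den ≤ r'.den)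
    (hδ : |δ| ≤ 1 / (2 * (r.den * r'.den))) (hκ : 2 * (κ * (r'.den : ℝ) ^ 2) ≤ 1) :
    κ ≤ |(r : ℝ) + δ - r'| := by
  have _ : (0 : ℝ) < r.den := mod_cast r.den_pos
  have _ : (0 : ℝ) < r'.den := mod_cast r'.den_pos
  have hle' : (r.den : ℝ) ≤ r'.den := mod_cast hle
  have hsep := one_div_den_mul_den_le_abs_sub hne.symm
  have htri : |(r : ℝ) - r'| ≤ |(r : ℝ) + δ - r'| + |δ| := by
    simpa [add_sub_right_comm] using abs_sub ((r : ℝ) + δ - r') δ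
  have hhalf : (1 : ℝ) / (r.den * r'.den) = 2 * (1 / (2 * (r.den * r'.den))) := by field_simp
  have hκ' : κ ≤ 1 / (2 * (r.den * r'.den)) := calc
    κ ≤ 1 / (2 * (r'.den : ℝ) ^ 2) := by rw [le_div_iff₀ (by positivity)]; linarith
    _ ≤ 1 / (2 * (r.den * r'.den)) := by rw [pow_two]; gcongr
  linarith

/-- If the conclusion failed, the mirror image of `r'` would have a denominator smaller than that
of `r'` and be too close to `r`. -/
theorem QuadraticDecay.mul_le_abs_add_sub {ψ : ℕ → ℝ} (hψ : QuadraticDecay ψ) {r : ℚ}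
    {Q c : ℕ} {K : ℝ} (hK : 0 ≤ K) (hQ : (ψ r.den)⁻¹ = Q) (hdvd : r.den ^ 2 ∣ Q)
    (hfar : ∀ r' : ℚ, r' ≠ r → 2 * K * ψ (max r'.den c) ≤ |(r : ℝ) - r'|)
    (hK₁ : 2 * K * ((r.den : ℝ) ^ 2 * ψ r.den) ≤ 1) (hc : (r.den : ℝ) ^ 2 * ψ r.den ≤ ψ c)
    {r' : ℚ} (hne : r' ≠ r) (hlt : r.den < r'.den) (hltQ : r'.den < Q) :
    K * ψ r'.den ≤ |(r : ℝ) + ψ r.den - r'| := by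
  have hψQ : ψ r.den = 1 / Q := by rw [← hQ, one_div, inv_inv]
  have hanti := hψ.sq_mul_le _ _ r.den_pos hlt.le
  have hq₀ : (0 : ℝ) < r.den := mod_cast r.den_pos
  have hQ₀ : (0 : ℝ) < Q := mod_cast pos_of_gt hltQ
  have hqb : (r.den : ℝ) < r'.den := mod_cast hlt
  have hb₀ : (0 : ℝ) < r'.den := hq₀.trans hqb
  set q := r.den
  set b := r'.den
  have hKb : 2 * (K * (b ^ 2 * ψ b)) ≤ 1 := by linarith [mul_le_mul_of_nonneg_left hanti hK]
  rcases le_or_gt (2 * (q * b) : ℝ) Q with hQb | hQb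
  · refine le_abs_add_sub_of_mul_sq_le hne hlt.le ?_ (by linarith)
    rw [hψQ, abs_of_pos (by positivity)]
    exact one_div_le_one_div_of_le (by positivity) hQb
  by_contra! hcon
  obtain ⟨X, t, hX, htr, htX, hdist, hdist'⟩ := exists_mirror hne hdvd hltQ
  have hX₀ : (0 : ℝ) < X := mod_cast hX
  rw [hψQ, hdist, div_lt_iff₀ (by positivity)] at hcon
  have hXb : X * b < K * (b ^ 2 * ψ b) * Q := by linarith [mul_lt_mul_of_pos_right hcon hb₀]
  have hXq : (X : ℝ) < q := by
    refine lt_of_mul_lt_mul_right ?_ hb₀.le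
    linarith [mul_le_mul_of_nonneg_right hKb hQ₀.le]
  have hψX := hψ.sq_mul_le_sq_mul_max hX (mod_cast (hXq.trans hqb).le) (hanti.trans hc)
  have hnear : 2 * K * ψ (max X c) ≤ (b + X) / (Q * X) := calc
    2 * K * ψ (max X c) ≤ 2 * K * ψ (max t.den c) := by
        gcongr
        exact hψ.le (lt_max_of_lt_left t.den_pos) (max_le_max_right c htX)
    _ ≤ |(r : ℝ) - t| := hfar t htr
    _ ≤ (b + X) / (Q * X) := hdist'
  rw [le_div_iff₀ (by positivity)] at hnear
  have hKX : K * (b ^ 2 * ψ b) * Q ≤ K * (X ^ 2 * ψ (max X c)) * Q := by gcongr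
  nlinarith

/-! ### Measure of the points near rationals -/

theorem sum_one_div_four_pow_le (n : ℕ) : ∑ j ∈ Finset.range n, (1 / 4 : ℝ) ^ j ≤ 4 / 3 := by
  have h := (summable_geometric_of_lt_one (r := (1 / 4 : ℝ)) (by norm_num)
    (by norm_num)).sum_le_tsum (Finset.range n) fun j _ => by positivity
  rw [tsum_geometric_of_lt_one (by norm_num) (by norm_num)] at h
  norm_num at h ⊢
  exact h

theorem exists_two_pow_mul_le_and_lt {c d : ℕ} (hc : 0 < c) (hcd : c ≤ d) :
    ∃ j, 2 ^ j * c ≤ d ∧ d < 2 ^ (j + 1) * c := by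
  refine ⟨Nat.log 2 (d / c), ?_, ?_⟩
  · rw [← Nat.le_div_iff_mul_le hc]
    exact Nat.pow_log_le_self 2 (Nat.div_pos hcd hc).ne'
  · rw [← Nat.div_lt_iff_lt_mul hc]
    exact Nat.lt_pow_succ_log_self one_lt_two _

namespace QuadraticDecay

variable {ψ : ℕ → ℝ} (hψ : QuadraticDecay ψ)
include hψ

theorem volume_thickening_den_lt_le {c j : ℕ} {K u v : ℝ} (hK : 0 ≤ K) (hc : 0 < c)
    (hKc : K * ψ c ≤ (v - u) / 2) :
    volume (Metric.thickening (K * ψ (2 ^ j * c)) ((↑) '' {r : ℚ | r.den < 2 ^ (j + 1) * c}) ∩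
        Icc u v) ≤
      ENNReal.ofReal (16 * K * (v - u) * (((2 ^ j * c : ℕ) : ℝ) ^ 2 * ψ (2 ^ j * c)) +
        2 * K * ψ c * (1 / 4) ^ j) := by
  have hψ₀ : 0 < ψ (2 ^ j * c) := hψ.pos _ (by positivity)
  have hle : ψ (2 ^ j * c) ≤ ψ c := hψ.le hc (Nat.le_mul_of_pos_left c (by positivity))
  have hρ : K * ψ (2 ^ j * c) ≤ (v - u) / 2 := (mul_le_mul_of_nonneg_left hle hK).trans hKc
  have huv : 0 ≤ v - u := by linarith [mul_nonneg hK hψ₀.le]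
  refine (volume_thickening_inter_Icc_le (by positivity) (by positivity) (by linarith)
    (pairwise_image_ratCast_den_lt _)).trans (ENNReal.ofReal_le_ofReal ?_)
  calc ((v - u + 2 * (K * ψ (2 ^ j * c))) / (1 / ((2 ^ (j + 1) * c : ℕ) : ℝ) ^ 2) + 1) *
          (2 * (K * ψ (2 ^ j * c)))
      ≤ (2 * (v - u) / (1 / ((2 ^ (j + 1) * c : ℕ) : ℝ) ^ 2) + 1) * (2 * (K * ψ (2 ^ j * c))) := by
        gcongr
        linarith
    _ = 16 * K * (v - u) * (((2 ^ j * c : ℕ) : ℝ) ^ 2 * ψ (2 ^ j * c)) +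
          2 * K * ψ (2 ^ j * c) := by
        push_cast
        rw [div_div_eq_mul_div, div_one, pow_succ]
        ring
    _ ≤ 16 * K * (v - u) * (((2 ^ j * c : ℕ) : ℝ) ^ 2 * ψ (2 ^ j * c)) +
          2 * K * ((1 / 4) ^ j * ψ c) := by
        gcongr
        exact hψ.apply_two_pow_mul_le hc j
    _ = _ := by ring

theorem volume_exists_abs_sub_lt_le {c : ℕ} {K u v σ : ℝ} (hK : 0 ≤ K) (hc : 0 < c)
    (hKc : K * ψ c ≤ (v - u) / 2)
    (hσ : ∀ n, ∑ j ∈ Finset.range n, ((2 ^ j * c : ℕ) : ℝ) ^ 2 * ψ (2 ^ j * c) ≤ σ) :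
    volume {x ∈ Icc u v | ∃ r : ℚ, |x - r| < K * ψ (max r.den c)} ≤
      ENNReal.ofReal (16 * K * (v - u) * σ + 8 / 3 * (K * ψ c)) := by
  have hψc := hψ.pos c hc
  have huv : 0 ≤ v - u := by linarith [mul_nonneg hK hψc.le]
  refine le_trans (measure_mono ?_) (volume_iUnion_le_ofReal_of_sum_le
    (fun j => hψ.volume_thickening_den_lt_le (j := j) hK hc hKc) (fun j => ?_) fun n => ?_)
  · rintro x ⟨hx, r, hr⟩
    obtain ⟨j, hj, hj'⟩ := exists_two_pow_mul_le_and_lt hc (le_max_right r.den c)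
    refine mem_iUnion.2 ⟨j, Metric.mem_thickening_iff.2
      ⟨r, mem_image_of_mem _ ((le_max_left _ _).trans_lt hj'), hr.trans_le ?_⟩, hx⟩
    gcongr
    exact hψ.le (by positivity) hj
  · have := hψ.pos (2 ^ j * c) (by positivity)
    positivity
  · rw [Finset.sum_add_distrib, ← Finset.mul_sum, ← Finset.mul_sum]
    calc _ ≤ 16 * K * (v - u) * σ + 2 * K * ψ c * (4 / 3) := by
          gcongr
          · exact hσ n
          · exact sum_one_div_four_pow_le n
      _ = _ := by ring

end QuadraticDecay

theorem volume_thickening_intCast_div_le {N d : ℕ} {u v : ℝ} (hN : 2 ≤ N)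
    (hd : 1 ≤ (v - u) * d) :
    volume (Metric.thickening (1 / (d * N)) (range fun p : ℤ => (p : ℝ) / d) ∩ Icc u v) ≤
      ENNReal.ofReal (6 * (v - u) / N) := by
  have hd₀ : (0 : ℝ) < d := by
    refine d.cast_nonneg.lt_of_ne fun h => ?_
    rw [← h, mul_zero] at hd
    linarith
  have huv : 0 < v - u := pos_of_mul_pos_left (one_pos.trans_le hd) hd₀.le
  have hN₂ : (2 : ℝ) / N ≤ 1 := div_le_one_of_le₀ (mod_cast hN) N.cast_nonneg
  have _ : (0 : ℝ) < N := by positivity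
  refine (volume_thickening_inter_Icc_le (by positivity) (by positivity) (by linarith)
    (pairwise_range_intCast_div d)).trans (ENNReal.ofReal_le_ofReal ?_)
  calc ((v - u + 2 * (1 / (d * N))) / (1 / d) + 1) * (2 * (1 / (d * N)))
      = ((v - u) * d + 2 / N + 1) * (2 * (1 / (d * N))) := by field_simp
    _ ≤ ((v - u) * d + (v - u) * d + (v - u) * d) * (2 * (1 / (d * N))) := by gcongr; linarith
    _ = 6 * (v - u) / N := by field_simp; ring

theorem volume_exists_den_le_abs_sub_lt_le {c n N : ℕ} {u v : ℝ} (hc : 0 < c) (hN : 2 ≤ N)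
    (hcuv : 1 ≤ (v - u) * c) :
    volume {x ∈ Icc u v | ∃ r : ℚ, c ≤ r.den ∧ r.den ≤ n ∧ |x - r| < 1 / (r.den * N)} ≤
      ENNReal.ofReal (n * (6 * (v - u) / N)) := by
  have huv : 0 < v - u := pos_of_mul_pos_left (one_pos.trans_le hcuv) c.cast_nonneg
  calc _ ≤ volume (⋃ d ∈ Finset.Icc c n,
          Metric.thickening (1 / (d * N)) (range fun p : ℤ => (p : ℝ) / d) ∩ Icc u v) := by
        refine measure_mono ?_
        rintro x ⟨hx, r, hcr, hrn, hxr⟩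
        exact mem_biUnion (Finset.mem_Icc.2 ⟨hcr, hrn⟩)
          ⟨Metric.mem_thickening_iff.2 ⟨r, ⟨r.num, (Rat.cast_def r).symm⟩, hxr⟩, hx⟩
    _ ≤ ∑ d ∈ Finset.Icc c n,
          volume (Metric.thickening (1 / (d * N)) (range fun p : ℤ => (p : ℝ) / d) ∩ Icc u v) :=
        measure_biUnion_finset_le _ _
    _ ≤ (Finset.Icc c n).card • ENNReal.ofReal (6 * (v - u) / N) := by
        refine Finset.sum_le_card_nsmul _ _ _ fun d hd => ?_
        refine volume_thickening_intCast_div_le hN (hcuv.trans ?_)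
        gcongr
        exact (Finset.mem_Icc.1 hd).1
    _ ≤ ENNReal.ofReal (n * (6 * (v - u) / N)) := by
        rw [ENNReal.ofReal_mul n.cast_nonneg, ENNReal.ofReal_natCast, nsmul_eq_mul, Nat.card_Icc]
        gcongr
        lia

/-! ### Good points and isolated rationals -/

/-- The hypotheses of the theorem for the restriction `ψ` of `Ψ` to the positive integers and the
widths `g q = Ψ(q)ω(q)` of the annuli around the rationals of denominator `q`. The last field says
that a rational of denominator at least `1 / ψ q` carries an interval which is short compared with
such an annulus. -/
structure IsAdmissible (ψ g : ℕ → ℝ) : Prop extends QuadraticDecay ψ where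
  inv_eq : ∀ q, 0 < q → ∃ Q : ℕ, (ψ q)⁻¹ = Q ∧ q ^ 2 ∣ Q
  summable : Summable fun q : ℕ => (q : ℝ) * ψ q
  width_pos : ∀ q, 0 < q → 0 < g q
  width_le : ∀ q, 0 < q → g q ≤ ψ q
  width_anti : ∀ a b : ℕ, 0 < a → a ≤ b → g b ≤ g a
  eventually_mul_le : ∀ᶠ q : ℕ in atTop, ∀ b : ℕ, (ψ q)⁻¹ ≤ b → 180 * ψ b ≤ g q

/-- A denominator `B` beyond which the asymptotic smallness conditions on `ψ` hold with explicit
constants. -/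
structure IsThreshold (ψ g : ℕ → ℝ) (B : ℕ) : Prop where
  pos : 0 < B
  sum_dyadic_le : ∀ b ≥ B, ∀ n,
    ∑ j ∈ Finset.range n, ((2 ^ j * b : ℕ) : ℝ) ^ 2 * ψ (2 ^ j * b) ≤ 1 / 10 ^ 6
  mul_le : ∀ q ≥ B, ∀ b : ℕ, (ψ q)⁻¹ ≤ b → 180 * ψ b ≤ g q

theorem IsAdmissible.exists_isThreshold {ψ g : ℕ → ℝ} (h : IsAdmissible ψ g) :
    ∃ B, IsThreshold ψ g B := by
  obtain ⟨B, hB⟩ := h.exists_forall_sum_dyadic_le h.summable (η := 1 / 10 ^ 6) (by norm_num)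
  obtain ⟨B', hB'⟩ := eventually_atTop.1 h.eventually_mul_le
  exact ⟨max 1 (max B B'), by lia, fun b hb => hB b (by lia), fun q hq => hB' q (by lia)⟩

namespace IsThreshold

variable {ψ g : ℕ → ℝ} {B : ℕ} (hB : IsThreshold ψ g B)
include hB

theorem sq_mul_le {b : ℕ} (hb : B ≤ b) : (b : ℝ) ^ 2 * ψ b ≤ 1 / 10 ^ 6 := by
  simpa using hB.sum_dyadic_le b hb 1

theorem apply_le (hψ : QuadraticDecay ψ) {b : ℕ} (hb : B ≤ b) : ψ b ≤ 1 / 10 ^ 6 :=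
  have hb₀ : 0 < b := hB.pos.trans_le hb
  (le_mul_of_one_le_left (hψ.pos b hb₀).le (one_le_pow₀ (mod_cast hb₀))).trans (hB.sq_mul_le hb)

end IsThreshold

/-- A pair of a lower bound `c` for the denominators taken into account and a Dirichlet parameter
`N`, large compared with `c`. -/
structure IsFineScale (ψ : ℕ → ℝ) (c N : ℕ) : Prop where
  le : 101 ≤ N
  one_div_le : 1 / (N : ℝ) ≤ ψ c
  sq_mul_le : ∀ q : ℕ, N ≤ 100 * q → (q : ℝ) ^ 2 * ψ q ≤ ψ c

/-- A point far from all rationals, at the resolutions `ψ b` and `ψ c`, and whose Dirichlet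
approximation with parameter `N` does not have a denominator in `[c, N / 100]`. -/
structure IsGoodPoint (ψ : ℕ → ℝ) (b c N : ℕ) (x : ℝ) : Prop where
  far : ∀ r : ℚ, 2 * ψ (max r.den b) ≤ |x - r|
  far' : ∀ r : ℚ, 400 * ψ (max r.den c) ≤ |x - r|
  far_of_den_le : ∀ r : ℚ, c ≤ r.den → r.den ≤ N / 100 → 1 / (r.den * N) ≤ |x - r|

/-- A rational `r` close to `x`, of denominator comparable to `N`, and isolated from the other
rationals. -/
structure IsCentre (ψ : ℕ → ℝ) (c N : ℕ) (x : ℝ) (r : ℚ) : Prop where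
  le_den : c ≤ r.den
  le_mul_den : N ≤ 100 * r.den
  den_le : r.den ≤ N
  near : |x - r| ≤ 100 / N ^ 2
  far : ∀ r' : ℚ, r' ≠ r → 200 * ψ (max r'.den c) ≤ |(r : ℝ) - r'|

theorem IsFineScale.cast_pos {ψ : ℕ → ℝ} {c N : ℕ} (hN : IsFineScale ψ c N) : (0 : ℝ) < N :=
  mod_cast (by norm_num : 0 < 101).trans_le hN.le

theorem IsFineScale.div_sq_le {ψ : ℕ → ℝ} {c N : ℕ} (hN : IsFineScale ψ c N) :
    101 / (N : ℝ) ^ 2 ≤ ψ c := by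
  have hN₁ : (101 : ℝ) ≤ N := mod_cast hN.le
  refine le_trans ?_ hN.one_div_le
  rw [div_le_div_iff₀ (by positivity) (by positivity), one_mul, pow_two]
  gcongr

section Centres

variable {ψ g : ℕ → ℝ} {b B c N : ℕ} {x : ℝ} {r : ℚ}

theorem IsGoodPoint.le_den_and_le_mul_den (hx : IsGoodPoint ψ b c N x) (hN : IsFineScale ψ c N)
    (hr : |x - r| < 1 / (r.den * N)) : c ≤ r.den ∧ N ≤ 100 * r.den := by
  have hN₁ : (0 : ℝ) < N := hN.cast_pos
  have hcden : c ≤ r.den := by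
    by_contra! hlt
    have hfar := hx.far' r
    rw [max_eq_right hlt.le] at hfar
    have hle : 1 / ((r.den : ℝ) * N) ≤ 1 / N :=
      one_div_le_one_div_of_le hN₁ (le_mul_of_one_le_left hN₁.le (mod_cast r.den_pos))
    linarith [hN.one_div_le, one_div_pos.2 hN₁]
  refine ⟨hcden, ?_⟩
  by_contra! hlt
  exact (hx.far_of_den_le r hcden (by lia)).not_gt hr

theorem IsGoodPoint.mul_le_abs_sub (hx : IsGoodPoint ψ b c N x) (hψ : QuadraticDecay ψ)
    (hB : IsThreshold ψ g B) (hBc : B ≤ c) (hN : IsFineScale ψ c N) (hrN : r.den ≤ N)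
    (hxr : |x - r| ≤ 100 / N ^ 2) {r' : ℚ} (hne : r' ≠ r) :
    200 * ψ (max r'.den c) ≤ |(r : ℝ) - r'| := by
  have hN₁ : (0 : ℝ) < N := hN.cast_pos
  have hfar := hx.far' r'
  rcases le_or_gt (100 / (N : ℝ) ^ 2) (200 * ψ (max r'.den c)) with hscale | hscale
  · linarith [abs_sub_le x r r']
  have hcd : c ≤ r'.den := by
    by_contra! hlt
    rw [max_eq_right hlt.le] at hscale
    have hle : 100 / (N : ℝ) ^ 2 ≤ 101 / N ^ 2 := by gcongr; norm_num
    linarith [hN.div_sq_le, (by positivity : 0 < 100 / (N : ℝ) ^ 2)]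
  rw [max_eq_left hcd] at hscale ⊢
  have hd₀ : (0 : ℝ) < r'.den := mod_cast r'.den_pos
  have hr₀ : (0 : ℝ) < r.den := mod_cast r.den_pos
  rw [lt_div_iff₀ (by positivity)] at hscale
  have hdN : 200 * ψ r'.den * (N * r'.den) ≤ 1 := by
    have hψ₀ := (hψ.pos _ r'.den_pos).le
    rcases le_or_gt (100 * r'.den) N with hdN | hdN
    · have hdN : (100 * r'.den : ℝ) ≤ N := mod_cast hdN
      nlinarith [mul_nonneg hψ₀ hN₁.le]
    · have hdN : (N : ℝ) ≤ 100 * r'.den := mod_cast hdN.le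
      nlinarith [hB.sq_mul_le (hBc.trans hcd), mul_nonneg hψ₀ hd₀.le]
  calc 200 * ψ r'.den ≤ 1 / (N * r'.den) := by rwa [le_div_iff₀ (by positivity)]
    _ ≤ 1 / (r.den * r'.den) := by gcongr
    _ ≤ |(r : ℝ) - r'| := one_div_den_mul_den_le_abs_sub hne.symm

theorem IsGoodPoint.exists_isCentre (hx : IsGoodPoint ψ b c N x) (hψ : QuadraticDecay ψ)
    (hB : IsThreshold ψ g B) (hBc : B ≤ c) (hN : IsFineScale ψ c N) : ∃ r, IsCentre ψ c N x r := by
  have hN₁ : 0 < N := mod_cast hN.cast_pos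
  obtain ⟨r, hxr, hrN⟩ := Real.exists_rat_abs_sub_le_and_den_le x hN₁
  have hr₀ : (0 : ℝ) < r.den := mod_cast r.den_pos
  have hxr : |x - r| < 1 / (r.den * N) :=
    hxr.trans_lt (one_div_lt_one_div_of_lt (by positivity) (by nlinarith))
  obtain ⟨hcr, hNr⟩ := hx.le_den_and_le_mul_den hN hxr
  have hclose : |x - r| ≤ 100 / N ^ 2 := by
    refine hxr.le.trans ?_
    rw [div_le_div_iff₀ (by positivity) (by positivity)]
    have : (N : ℝ) ≤ 100 * r.den := mod_cast hNr
    nlinarith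
  exact ⟨r, hcr, hNr, hrN, hclose, fun r' hne => hx.mul_le_abs_sub hψ hB hBc hN hrN hclose hne⟩

end Centres

/-- The left end point of the interval attached to `r` in the Cantor construction, which is the
right half of the annulus `[r + ψ q - g q, r + ψ q]`, where `q` is the denominator of `r`. -/
noncomputable def shellLeft (ψ g : ℕ → ℝ) (r : ℚ) : ℝ := r + ψ r.den - g r.den / 2

/-- The right end point of the interval attached to `r` in the Cantor construction. -/
noncomputable def shellRight (ψ : ℕ → ℝ) (r : ℚ) : ℝ := r + ψ r.den

/-- Inside the interval attached to `r`, which is part of an interval of length `ℓ`, the points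
are far from the rationals other than `r` of intermediate scale. The scale of a rational of
denominator `d` is `ψ (max d B)`, and it is compared with `ℓ / 90` and with `1 / 90` of the length
of the interval attached to `r`. -/
def IsResolved (ψ g : ℕ → ℝ) (B : ℕ) (ℓ : ℝ) (r : ℚ) : Prop :=
  ∀ y ∈ Icc (shellLeft ψ g r) (shellRight ψ r), ∀ t : ℚ, t ≠ r →
    ψ (max t.den B) ≤ ℓ / 90 → g r.den / 180 < ψ (max t.den B) → ψ (max t.den B) ≤ |y - t|

theorem IsAdmissible.abs_sub_le_of_mem_shell {ψ g : ℕ → ℝ} (hψ : IsAdmissible ψ g) {r : ℚ} {y : ℝ}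
    (hy : y ∈ Icc (shellLeft ψ g r) (shellRight ψ r)) : |y - r| ≤ ψ r.den := by
  have hle := hψ.width_le _ r.den_pos
  have hpos := hψ.pos _ r.den_pos
  simp only [shellLeft, shellRight, mem_Icc] at hy
  rw [abs_le]
  constructor <;> linarith [hy.1, hy.2]

namespace IsCentre

variable {ψ g : ℕ → ℝ} {b B c N : ℕ} {x : ℝ} {r : ℚ} (hr : IsCentre ψ c N x r)
  (hψ : IsAdmissible ψ g) (hB : IsThreshold ψ g B) (hBc : B ≤ c)
include hr hψ hB hBc

theorem abs_sub_shell_le {y : ℝ} (hy : y ∈ Icc (shellLeft ψ g r) (shellRight ψ r)) :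
    |x - y| ≤ 101 / N ^ 2 := by
  have hN₀ : (0 : ℝ) < N := mod_cast (r.den_pos.trans_le hr.den_le)
  have hψr : ψ r.den ≤ 1 / N ^ 2 := by
    have hsq := hB.sq_mul_le (hBc.trans hr.le_den)
    have hNr : (N : ℝ) ≤ 100 * r.den := mod_cast hr.le_mul_den
    have hpos := hψ.pos _ r.den_pos
    rw [le_div_iff₀ (by positivity)]
    calc ψ r.den * N ^ 2 ≤ ψ r.den * (100 * r.den) ^ 2 := by gcongr
      _ ≤ 1 := by linarith
  have hsum : 100 / (N : ℝ) ^ 2 + 1 / N ^ 2 = 101 / N ^ 2 := by ring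
  linarith [abs_sub_le x r y, abs_sub_comm y r, hr.near, hψ.abs_sub_le_of_mem_shell hy]

theorem mul_le_abs_shellRight_sub (hN : IsFineScale ψ c N) {t : ℚ} (hne : t ≠ r)
    (hlt : r.den < t.den) (hscale : g r.den / 180 < ψ t.den) :
    100 * ψ t.den ≤ |shellRight ψ r - t| := by
  obtain ⟨Q, hQ, hdvd⟩ := hψ.inv_eq _ r.den_pos
  have hBr := hBc.trans hr.le_den
  have hltQ : t.den < Q := by
    by_contra! hle
    linarith [hB.mul_le r.den hBr t.den (by rw [hQ]; exact_mod_cast hle)]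
  refine hψ.mul_le_abs_add_sub (by norm_num) hQ hdvd (fun r' hr' => ?_) ?_
    (hN.sq_mul_le _ hr.le_mul_den) hne hlt hltQ
  · linarith [hr.far r' hr']
  · linarith [hB.sq_mul_le hBr]

theorem isResolved (hN : IsFineScale ψ c N) (hx : IsGoodPoint ψ b c N x) {ℓ : ℝ}
    (hb : ∀ d, ψ (max d B) ≤ ℓ / 90 → max d b = max d B) : IsResolved ψ g B ℓ r := by
  intro y hy t hne hℓ hscale
  rcases lt_or_ge t.den c with htc | hct
  · have hfar := hx.far t
    rw [hb _ hℓ] at hfar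
    have hc : ψ c ≤ ψ (max t.den B) :=
      hψ.le (lt_max_of_lt_right hB.pos) (max_le htc.le hBc)
    linarith [abs_sub_le x y t, hr.abs_sub_shell_le hψ hB hBc hy, hN.div_sq_le]
  rw [max_eq_left (hBc.trans hct)] at hscale ⊢
  rcases le_or_gt t.den r.den with htr | hrt
  · have hfar := hr.far t hne
    rw [max_eq_left hct] at hfar
    have hle := hψ.le t.den_pos htr
    have hpos := hψ.pos _ t.den_pos
    linarith [abs_sub_le (r : ℝ) y t, abs_sub_comm y r, hψ.abs_sub_le_of_mem_shell hy]
  · have hfar := hr.mul_le_abs_shellRight_sub hψ hB hBc hN hne hrt hscale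
    have hpos := hψ.pos _ t.den_pos
    have hend : |shellRight ψ r - y| ≤ g r.den / 2 := by
      simp only [shellLeft, mem_Icc] at hy ⊢
      rw [abs_le]
      simp only [shellRight] at hy ⊢
      constructor <;> linarith [hy.1, hy.2, hψ.width_pos _ r.den_pos]
    linarith [abs_sub_le (shellRight ψ r) y t]

end IsCentre

theorem exists_forall_max_eq {ψ : ℕ → ℝ} {η : ℝ} {B : ℕ} (h : ∃ b ≥ B, ψ b ≤ η) :
    ∃ b ≥ B, ψ b ≤ η ∧ ∀ d, ψ (max d B) ≤ η → max d b = max d B := by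
  classical
  obtain ⟨hBb, hb⟩ := Nat.find_spec h
  refine ⟨Nat.find h, hBb, hb, fun d hd => ?_⟩
  have hmin : Nat.find h ≤ max d B := Nat.find_min' h ⟨le_max_right _ _, hd⟩
  lia

theorem IsAdmissible.eventually_isFineScale {ψ g : ℕ → ℝ} {c : ℕ} (hψ : IsAdmissible ψ g)
    (hc : 0 < c) : ∀ᶠ N in atTop, IsFineScale ψ c N := by
  have hψc := hψ.pos c hc
  obtain ⟨q₀, hq₀⟩ := eventually_atTop.1
    ((hψ.tendsto_sq_mul hψ.summable).eventually (ge_mem_nhds hψc))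
  filter_upwards [eventually_ge_atTop 101, eventually_ge_atTop (100 * q₀),
    tendsto_one_div_atTop_nhds_zero_nat.eventually (ge_mem_nhds hψc)] with N hN hNq hNc
  exact ⟨hN, hNc, fun q hq => hq₀ q (by lia)⟩

namespace QuadraticDecay

variable {ψ g : ℕ → ℝ} {b B c N : ℕ} {u v : ℝ} (hψ : QuadraticDecay ψ)
include hψ

theorem volume_not_isGoodPoint_le (hB : IsThreshold ψ g B) (huv : u < v) (hBb : B ≤ b)
    (hBc : B ≤ c) (hb : ψ b ≤ (v - u) / 90) (hc : ψ c ≤ (v - u) / 10 ^ 5)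
    (hcuv : 1 ≤ (v - u) * c) (hN : 2 ≤ N) :
    volume {x ∈ Icc u v | ¬ IsGoodPoint ψ b c N x} ≤ ENNReal.ofReal (14 / 100 * (v - u)) := by
  have hb₀ := hB.pos.trans_le hBb
  have hc₀ := hB.pos.trans_le hBc
  have hℓ : 0 < v - u := sub_pos.2 huv
  have hn : ((N / 100 : ℕ) : ℝ) * (6 * (v - u) / N) ≤ 6 / 100 * (v - u) := by
    calc ((N / 100 : ℕ) : ℝ) * (6 * (v - u) / N) ≤ (N / 100 : ℝ) * (6 * (v - u) / N) := by
          gcongr; exact Nat.cast_div_le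
      _ = 6 / 100 * (v - u) := by field_simp
  have hnear := (hψ.volume_exists_abs_sub_lt_le (u := u) (v := v) zero_le_two hb₀
    (by linarith) (hB.sum_dyadic_le b hBb)).trans
    (ENNReal.ofReal_le_ofReal (show _ ≤ 6 / 100 * (v - u) by linarith))
  have hnear' := (hψ.volume_exists_abs_sub_lt_le (u := u) (v := v) (K := 400) (by norm_num) hc₀
    (by linarith) (hB.sum_dyadic_le c hBc)).trans
    (ENNReal.ofReal_le_ofReal (show _ ≤ 2 / 100 * (v - u) by linarith))
  have hnear'' := (volume_exists_den_le_abs_sub_lt_le (n := N / 100) hc₀ hN hcuv).trans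
    (ENNReal.ofReal_le_ofReal hn)
  set Z := {x ∈ Icc u v | ∃ r : ℚ, |x - r| < 2 * ψ (max r.den b)}
  set Z' := {x ∈ Icc u v | ∃ r : ℚ, |x - r| < 400 * ψ (max r.den c)}
  set Z'' := {x ∈ Icc u v | ∃ r : ℚ, c ≤ r.den ∧ r.den ≤ N / 100 ∧ |x - r| < 1 / (r.den * N)}
  have hcover : {x ∈ Icc u v | ¬ IsGoodPoint ψ b c N x} ⊆ Z ∪ Z' ∪ Z'' := by
    rintro x ⟨hx, hgood⟩
    by_contra! hbad
    simp only [mem_union, not_or] at hbad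
    obtain ⟨⟨hZ, hZ'⟩, hZ''⟩ := hbad
    refine hgood ⟨fun r => ?_, fun r => ?_, fun r hcr hrn => ?_⟩ <;> by_contra! hlt
    · exact hZ ⟨hx, r, hlt⟩
    · exact hZ' ⟨hx, r, hlt⟩
    · exact hZ'' ⟨hx, r, hcr, hrn, hlt⟩
  calc volume {x ∈ Icc u v | ¬ IsGoodPoint ψ b c N x}
      ≤ volume Z + volume Z' + volume Z'' := (measure_mono hcover).trans
        ((measure_union_le _ _).trans (by gcongr; exact measure_union_le _ _))
    _ ≤ ENNReal.ofReal (6 / 100 * (v - u)) + ENNReal.ofReal (2 / 100 * (v - u)) +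
        ENNReal.ofReal (6 / 100 * (v - u)) := by gcongr
    _ = ENNReal.ofReal (14 / 100 * (v - u)) := by
      rw [← ENNReal.ofReal_add, ← ENNReal.ofReal_add] <;> first | positivity | ring_nf

theorem ofReal_half_lt_volume_isGoodPoint (hB : IsThreshold ψ g B) (huv : u < v) (hBb : B ≤ b)
    (hBc : B ≤ c) (hb : ψ b ≤ (v - u) / 90) (hc : ψ c ≤ (v - u) / 10 ^ 5)
    (hcuv : 1 ≤ (v - u) * c) (hN : 2 ≤ N) :
    ENNReal.ofReal ((v - u) / 2) <
      volume {x ∈ Icc (u + (v - u) / 10) (v - (v - u) / 10) | IsGoodPoint ψ b c N x} := by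
  have hℓ : 0 < v - u := sub_pos.2 huv
  have hbad := hψ.volume_not_isGoodPoint_le hB huv hBb hBc hb hc hcuv hN
  set A := {x ∈ Icc (u + (v - u) / 10) (v - (v - u) / 10) | IsGoodPoint ψ b c N x}
  have hcover : Icc (u + (v - u) / 10) (v - (v - u) / 10) ⊆
      A ∪ {x ∈ Icc u v | ¬ IsGoodPoint ψ b c N x} := by
    intro x hx
    by_cases hgood : IsGoodPoint ψ b c N x
    · exact Or.inl ⟨hx, hgood⟩
    · exact Or.inr ⟨⟨by linarith [hx.1], by linarith [hx.2]⟩, hgood⟩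
  by_contra! hA
  refine absurd ?_ (((ENNReal.ofReal_lt_ofReal_iff (mul_pos (by norm_num) hℓ)).2
    (show 64 / 100 * (v - u) < 8 / 10 * (v - u) by linarith)).not_ge)
  calc ENNReal.ofReal (8 / 10 * (v - u))
      = volume (Icc (u + (v - u) / 10) (v - (v - u) / 10)) := by rw [Real.volume_Icc]; ring_nf
    _ ≤ volume A + volume {x ∈ Icc u v | ¬ IsGoodPoint ψ b c N x} :=
      (measure_mono hcover).trans (measure_union_le _ _)
    _ ≤ ENNReal.ofReal ((v - u) / 2) + ENNReal.ofReal (14 / 100 * (v - u)) := by gcongr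
    _ = ENNReal.ofReal (64 / 100 * (v - u)) := by
      rw [← ENNReal.ofReal_add] <;> first | positivity | ring_nf

end QuadraticDecay

namespace IsAdmissible

variable {ψ g : ℕ → ℝ} {B : ℕ} {u v : ℝ} (hψ : IsAdmissible ψ g) (hB : IsThreshold ψ g B)
include hψ hB

/-- The resolutions of the good points are chosen in terms of the length of the interval: `b` is
the first one with `ψ b ≤ (v - u) / 90`, so that denominators of larger scale are not seen. -/
theorem eventually_exists_forall_mem_isCentre (huv : u < v) :
    ∃ c ≥ B, ∀ᶠ N : ℕ in atTop, 101 / (N : ℝ) ^ 2 ≤ (v - u) / 10 ∧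
      ∀ m : ℕ, m * 1600 ≤ (v - u) * (N : ℝ) ^ 2 → ∃ (x : ℕ → ℝ) (r : ℕ → ℚ),
        (∀ i < m, x i ∈ Icc (u + (v - u) / 10) (v - (v - u) / 10) ∧
          IsCentre ψ c N (x i) (r i) ∧ IsResolved ψ g B (v - u) (r i)) ∧
        ∀ i, i + 1 < m → x i + 400 / (N : ℝ) ^ 2 ≤ x (i + 1) := by
  have hℓ : 0 < v - u := sub_pos.2 huv
  have hsmall {η : ℝ} (hη : 0 < η) : ∀ᶠ q in atTop, ψ q ≤ η :=
    (hψ.tendsto_zero hψ.summable).eventually (ge_mem_nhds hη)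
  obtain ⟨b, hBb, hb, hbmax⟩ := exists_forall_max_eq (B := B)
    ((eventually_ge_atTop B).and (hsmall (η := (v - u) / 90) (by positivity))).exists
  obtain ⟨c, hBc, hc, hcuv⟩ := ((eventually_ge_atTop B).and
    ((hsmall (η := (v - u) / 10 ^ 5) (by positivity)).and
      ((tendsto_natCast_atTop_atTop.const_mul_atTop hℓ).eventually_ge_atTop 1))).exists
  have hsq : Tendsto (fun N : ℕ => 101 / (N : ℝ) ^ 2) atTop (nhds 0) :=
    tendsto_const_nhds.div_atTop
      ((tendsto_pow_atTop two_ne_zero).comp tendsto_natCast_atTop_atTop)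
  refine ⟨c, hBc, ?_⟩
  filter_upwards [hψ.eventually_isFineScale (hB.pos.trans_le hBc),
    hsq.eventually (ge_mem_nhds (show 0 < (v - u) / 10 by positivity))] with N hN hNℓ
  refine ⟨hNℓ, fun m hm => ?_⟩
  have hN₀ := hN.cast_pos
  have hvol := hψ.ofReal_half_lt_volume_isGoodPoint hB huv hBb hBc hb hc hcuv
    ((show 2 ≤ 101 by norm_num).trans hN.le)
  have hcount : (m : ℝ) * (2 * (400 / N ^ 2)) ≤ (v - u) / 2 := by
    rw [← mul_div_assoc, ← mul_div_assoc, div_le_iff₀ (by positivity)]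
    linarith
  obtain ⟨x, hx, hxstep⟩ := exists_forall_mem_and_add_le
    (show 0 < 400 / (N : ℝ) ^ 2 by positivity) m
    ⟨u + (v - u) / 10, fun y hy => hy.1.1⟩ ((ENNReal.ofReal_le_ofReal hcount).trans_lt hvol)
  have hcentre (i : ℕ) : ∃ r, i < m → IsCentre ψ c N (x i) r := by
    by_cases hi : i < m
    · obtain ⟨r, hr⟩ := (hx i hi).2.exists_isCentre hψ.toQuadraticDecay hB hBc hN
      exact ⟨r, fun _ => hr⟩
    · exact ⟨0, fun h => absurd h hi⟩
  choose r hr using hcentre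
  exact ⟨x, r, fun i hi => ⟨(hx i hi).1, hr i hi,
    (hr i hi).isResolved hψ hB hBc hN (hx i hi).2 hbmax⟩, hxstep⟩

theorem eventually_exists_children (huv : u < v) :
    ∀ᶠ N : ℕ in atTop, ∀ m : ℕ, m * 1600 ≤ (v - u) * (N : ℝ) ^ 2 → ∃ r : ℕ → ℚ,
      (∀ i < m, N ≤ 100 * (r i).den ∧ (r i).den ≤ N ∧
        Icc (shellLeft ψ g (r i)) (shellRight ψ (r i)) ⊆ Icc u v ∧
        IsResolved ψ g B (v - u) (r i)) ∧
      ∀ i j, i < j → j < m →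
        ((j : ℝ) - i) * (100 / (N : ℝ) ^ 2) ≤ shellLeft ψ g (r j) - shellRight ψ (r i) := by
  obtain ⟨c, hBc, hc⟩ := hψ.eventually_exists_forall_mem_isCentre hB huv
  filter_upwards [hc] with N ⟨hNℓ, hN⟩ m hm
  obtain ⟨x, r, hx, hxstep⟩ := hN m hm
  have hshell {i : ℕ} (hi : i < m) {y : ℝ}
      (hy : y ∈ Icc (shellLeft ψ g (r i)) (shellRight ψ (r i))) : |x i - y| ≤ 101 / N ^ 2 :=
    (hx i hi).2.1.abs_sub_shell_le hψ hB hBc hy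
  have hshell₀ (i : ℕ) : shellLeft ψ g (r i) ≤ shellRight ψ (r i) := by
    simp only [shellLeft, shellRight]
    linarith [hψ.width_pos _ (r i).den_pos]
  refine ⟨r, fun i hi => ⟨(hx i hi).2.1.le_mul_den, (hx i hi).2.1.den_le, fun y hy => ?_,
    (hx i hi).2.2⟩, fun i j hij hj => ?_⟩
  · have hdist := abs_le.1 ((hshell hi hy).trans hNℓ)
    exact ⟨by linarith [(hx i hi).1.1], by linarith [(hx i hi).1.2]⟩
  · have hstep := add_sub_mul_le_of_forall_add_le hxstep hij.le hj
    have hleft := (abs_le.1 (hshell hj (left_mem_Icc.2 (hshell₀ j)))).2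
    have hright := (abs_le.1 (hshell (hij.trans hj) (right_mem_Icc.2 (hshell₀ i)))).1
    have hij : (1 : ℝ) ≤ j - i := by
      rw [le_sub_iff_add_le']
      exact_mod_cast hij
    have hh : 0 ≤ 1 / (N : ℝ) ^ 2 := by positivity
    rw [div_eq_mul_one_div] at hstep hleft hright ⊢
    nlinarith

end IsAdmissible

/-! ### The Cantor set -/

/-- The analogue of `ESet` for functions on the positive integers: `x` is `ψ`-approximable, and
from some denominator on it does not lie within less than `ψ q - g q` of a fraction `p / q`. -/
def exactSet (ψ g : ℕ → ℝ) : Set ℝ :=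
  {x | {pq : ℤ × ℕ | 0 < pq.2 ∧ |x - (pq.1 : ℝ) / (pq.2 : ℝ)| ≤ ψ pq.2}.Infinite ∧
    ∀ᶠ q : ℕ in atTop, ∀ p : ℤ, ψ q - g q ≤ |x - (p : ℝ) / (q : ℝ)|}

/-- The child relation of the Cantor construction: the interval attached to `r'` is resolved
relative to the interval attached to `r`, whose length is `g r.den / 2`. -/
def IsChild (ψ g : ℕ → ℝ) (B : ℕ) (r r' : ℚ) : Prop :=
  r.den < r'.den ∧ IsResolved ψ g B (g r.den / 2) r'

theorem den_intCast_div_natCast_dvd (p : ℤ) (q : ℕ) : ((p : ℚ) / q).den ∣ q := by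
  have hdvd := Rat.den_dvd p q
  rw [Rat.divInt_eq_div] at hdvd
  exact_mod_cast hdvd

theorem sub_le_abs_sub_of_mem_shell {ψ g : ℕ → ℝ} {r : ℚ} {x : ℝ}
    (hx : x ∈ Icc (shellLeft ψ g r) (shellRight ψ r)) : ψ r.den - g r.den / 2 ≤ |x - r| := by
  have hleft := hx.1
  simp only [shellLeft] at hleft
  exact le_abs.2 (Or.inl (by linarith))

namespace IsAdmissible

variable {ψ g : ℕ → ℝ} {B : ℕ} (hψ : IsAdmissible ψ g)
include hψ

theorem sub_width_le_of_dvd {d q : ℕ} (hq : 0 < q) (hdq : d ∣ q) :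
    ψ q - g q ≤ ψ d - g d / 2 := by
  have hd := Nat.pos_of_dvd_of_pos hdq hq
  obtain ⟨t, rfl⟩ := hdq
  have ht : 0 < t := Nat.pos_of_mul_pos_left hq
  have hg := hψ.width_le d hd
  have hgt := hψ.width_pos _ hq
  obtain rfl | ht₁ : t = 1 ∨ 2 ≤ t := by lia
  · rw [mul_one] at hgt ⊢
    linarith
  · have hmul := hψ.apply_mul_le ht hd
    rw [mul_comm t] at hmul
    have hfour : 4 * ψ (d * t) ≤ ψ d := by
      have ht₂ : (4 : ℝ) ≤ t ^ 2 := mod_cast Nat.pow_le_pow_left ht₁ 2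
      exact (mul_le_mul_of_nonneg_right ht₂ (hψ.pos _ hq).le).trans hmul
    linarith [hψ.pos d hd]

theorem tendsto_width_of_isChild {r : ℕ → ℚ} (hr : ∀ n, IsChild ψ g B (r n) (r (n + 1))) :
    Tendsto (fun n => g (r n).den) atTop (nhds 0) :=
  squeeze_zero (fun n => (hψ.width_pos _ (r n).den_pos).le)
    (fun n => hψ.width_le _ (r n).den_pos)
    ((hψ.tendsto_zero hψ.summable).comp (strictMono_nat_of_lt_succ fun n => (hr n).1).tendsto_atTop)

section Chain

variable {r : ℕ → ℚ} {x : ℝ} (hB : IsThreshold ψ g B) (hr₀ : IsResolved ψ g B 1 (r 0))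
  (hr : ∀ n, IsChild ψ g B (r n) (r (n + 1)))
  (hx : ∀ n, x ∈ Icc (shellLeft ψ g (r n)) (shellRight ψ (r n)))
include hB hr₀ hr hx

/-- The scales dealt with at the steps of the construction exhaust all scales. -/
theorem le_abs_sub_of_forall_ne {t : ℚ} (ht : ∀ n, t ≠ r n) : ψ (max t.den B) ≤ |x - t| := by
  classical
  have hscale : 0 < ψ (max t.den B) := hψ.pos _ (lt_max_of_lt_left t.den_pos)
  have hex : ∃ n, g (r n).den / 180 < ψ (max t.den B) := by
    obtain ⟨n, hn⟩ := ((hψ.tendsto_width_of_isChild hr).eventually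
      (gt_mem_nhds (show 0 < 180 * ψ (max t.den B) by positivity))).exists
    exact ⟨n, by linarith⟩
  have hlt := Nat.find_spec hex
  rcases hn : Nat.find hex with _ | n
  · rw [hn] at hlt
    have hle := hB.apply_le hψ.toQuadraticDecay (le_max_right t.den B)
    exact hr₀ x (hx 0) t (ht 0) (by linarith) hlt
  · rw [hn] at hlt
    have hge := not_lt.1 (Nat.find_min hex (m := n) (by lia))
    exact (hr n).2 x (hx (n + 1)) t (ht (n + 1)) (by linarith) hlt

theorem mem_exactSet : x ∈ exactSet ψ g := by
  have hden : StrictMono fun n => (r n).den := strictMono_nat_of_lt_succ fun n => (hr n).1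
  constructor
  · refine Set.infinite_of_injective_forall_mem (f := fun n => ((r n).num, (r n).den))
      (fun m n hmn => hden.injective (Prod.ext_iff.1 hmn).2) fun n => ⟨(r n).den_pos, ?_⟩
    simp only [← Rat.cast_def]
    exact hψ.abs_sub_le_of_mem_shell (hx n)
  filter_upwards [eventually_ge_atTop B] with q hq p
  have hq₀ : 0 < q := hB.pos.trans_le hq
  have hdvd := den_intCast_div_natCast_dvd p q
  have hcast : (p : ℝ) / q = ((p / q : ℚ) : ℝ) := by push_cast; rfl
  rw [hcast]
  by_cases hchain : ∃ n, (p / q : ℚ) = r n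
  · obtain ⟨n, hn⟩ := hchain
    rw [hn] at hdvd ⊢
    exact (hψ.sub_width_le_of_dvd hq₀ hdvd).trans (sub_le_abs_sub_of_mem_shell (hx n))
  · push Not at hchain
    calc ψ q - g q ≤ ψ q := sub_le_self _ (hψ.width_pos q hq₀).le
      _ ≤ ψ (max (p / q : ℚ).den B) :=
        hψ.le (lt_max_of_lt_right hB.pos) (max_le (Nat.le_of_dvd hq₀ hdvd) hq)
      _ ≤ |x - (p / q : ℚ)| := hψ.le_abs_sub_of_forall_ne hB hr₀ hr hx hchain

end Chain

end IsAdmissible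

theorem exists_nat_mul_le_and_le_two_mul {a x : ℝ} (ha : 0 < a) (hx : 2 * a ≤ x) :
    ∃ m : ℕ, 2 ≤ m ∧ m * a ≤ x ∧ x ≤ 2 * (m * a) := by
  have htwo : 2 ≤ x / a := (le_div_iff₀ ha).2 hx
  have hfloor := Nat.floor_le (two_pos.le.trans htwo)
  have hlt := Nat.lt_floor_add_one (x / a)
  rw [le_div_iff₀ ha] at hfloor
  rw [div_lt_iff₀ ha] at hlt
  exact ⟨⌊x / a⌋₊, Nat.le_floor (mod_cast htwo), hfloor, by linarith⟩

theorem shellRight_sub_shellLeft (ψ g : ℕ → ℝ) (r : ℚ) :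
    shellRight ψ r - shellLeft ψ g r = g r.den / 2 := by
  simp only [shellLeft, shellRight]
  ring

namespace IsAdmissible

variable {ψ g : ℕ → ℝ} {B : ℕ} {s : ℝ} (hψ : IsAdmissible ψ g)
include hψ

theorem exists_isResolved_one (hB : IsThreshold ψ g B) : ∃ r, IsResolved ψ g B 1 r := by
  obtain ⟨N, hN, hN₄₀⟩ := ((hψ.eventually_exists_children hB zero_lt_one).and
    (eventually_ge_atTop 40)).exists
  have hN₄₀ : (40 : ℝ) ≤ N := mod_cast hN₄₀
  obtain ⟨r, hr, -⟩ := hN 1 (by norm_num; nlinarith)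
  exact ⟨r 0, by simpa using (hr 0 one_pos).2.2.2⟩

theorem eventually_exists_isSplitting (hB : IsThreshold ψ g B) {F : Set ℚ} (hF : F.Finite) {ℓ : ℝ}
    (hFℓ : ∀ r ∈ F, ℓ ≤ g r.den / 2) :
    ∀ᶠ N : ℕ in atTop, ∀ m : ℕ, 2 ≤ m → m * 1600 ≤ ℓ * (N : ℝ) ^ 2 →
      ∃ child, IsSplitting (shellLeft ψ g) (shellRight ψ) (IsChild ψ g B) F m
        (100 / (N : ℝ) ^ 2) (g N / 2) child := by
  have hlt (r : ℚ) : shellLeft ψ g r < shellRight ψ r := by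
    rw [← sub_pos, shellRight_sub_shellLeft]
    exact half_pos (hψ.width_pos _ r.den_pos)
  filter_upwards [eventually_gt_atTop 0, (eventually_all_finite hF).2 fun r _ =>
    (hψ.eventually_exists_children hB (hlt r)).and (eventually_gt_atTop (100 * r.den))]
    with N hN₀ hN m hm hmℓ
  have hchildren : ∀ r ∈ F, _ := fun r hr => (hN r hr).1 m (hmℓ.trans (by
    rw [shellRight_sub_shellLeft]
    gcongr
    exact hFℓ r hr))
  choose! child hchild hsep using hchildren
  refine ⟨child, hm, by positivity, half_pos (hψ.width_pos N hN₀), fun r hr j hj => ⟨?_, ?_⟩,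
    fun r hr j hj => (hchild r hr j hj).2.2.1, fun r hr j hj => ?_, hsep⟩
  · have hden := (hchild r hr j hj).1
    have hrN := (hN r hr).2
    lia
  · rw [← shellRight_sub_shellLeft]
    exact (hchild r hr j hj).2.2.2
  · rw [shellRight_sub_shellLeft]
    gcongr
    exact hψ.width_anti _ _ (Rat.den_pos _) (hchild r hr j hj).2.1

theorem le_dimH_exactSet (hs : 0 < s) (hs1 : s ≤ 1)
    (hlarge : ∀ K : ℝ, ∃ᶠ N : ℕ in atTop, K ≤ (N : ℝ) ^ 2 * g N ^ s) :
    ENNReal.ofReal s ≤ dimH (exactSet ψ g) := by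
  obtain ⟨B, hB⟩ := hψ.exists_isThreshold
  obtain ⟨r₀, hr₀⟩ := hψ.exists_isResolved_one hB
  refine le_dimH_of_splitting (left := shellLeft ψ g) (right := shellRight ψ)
    (Child := IsChild ψ g B) (i₀ := r₀) (c := 1 / 32) hs hs1 (by norm_num) ?_
    (fun F hF ℓ hℓ hFℓ => ?_) fun r x hr hchild hx => hψ.mem_exactSet hB (hr ▸ hr₀) hchild hx
  · rw [← sub_pos, shellRight_sub_shellLeft]
    exact half_pos (hψ.width_pos _ r₀.den_pos)
  simp only [shellRight_sub_shellLeft] at hFℓ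
  have hsq : Tendsto (fun N : ℕ => ℓ * (N : ℝ) ^ 2) atTop atTop :=
    ((tendsto_pow_atTop two_ne_zero).comp tendsto_natCast_atTop_atTop).const_mul_atTop hℓ
  obtain ⟨N, hK, hN₀, hsplit, hNℓ⟩ := ((hlarge (3200 * 2 ^ s * ℓ ^ s / ℓ)).and_eventually
    ((eventually_gt_atTop 0).and ((hψ.eventually_exists_isSplitting hB hF hFℓ).and
      (hsq.eventually_ge_atTop (2 * 1600))))).exists
  obtain ⟨m, hm, hmℓ, hℓm⟩ := exists_nat_mul_le_and_le_two_mul (by norm_num) hNℓ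
  obtain ⟨child, hchild⟩ := hsplit m hm hmℓ
  refine ⟨m, 100 / N ^ 2, g N / 2, child, hchild, ?_, ?_⟩
  · rw [mul_div_assoc', le_div_iff₀ (by positivity)]
    linarith
  · have hg := (hψ.width_pos N hN₀).le
    have hcount := mul_le_mul_of_nonneg_right hℓm (Real.rpow_nonneg hg s)
    rw [div_le_iff₀ hℓ] at hK
    rw [Real.div_rpow hg zero_le_two, mul_div_assoc', le_div_iff₀ (by positivity)]
    linarith

end IsAdmissible

/-! ### The covering by annuli -/

/-- The two parts of the annulus `ψ q - g q ≤ |x - p / q| ≤ ψ q`, to the right and to the left of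
`p / q`. -/
def annulusPart (ψ g : ℕ → ℝ) (q : ℕ) (p : ℤ) : Bool → Set ℝ
  | true => Icc ((p : ℝ) / q + ψ q - g q) ((p : ℝ) / q + ψ q)
  | false => Icc ((p : ℝ) / q - ψ q) ((p : ℝ) / q - ψ q + g q)

theorem ediam_annulusPart (ψ g : ℕ → ℝ) (q : ℕ) (p : ℤ) (b : Bool) :
    Metric.ediam (annulusPart ψ g q p b) = ENNReal.ofReal (g q) := by
  cases b <;> simp only [annulusPart, Real.ediam_Icc] <;> ring_nf

theorem exists_mem_annulusPart {ψ g : ℕ → ℝ} {q : ℕ} {p : ℤ} {x : ℝ}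
    (hle : |x - (p : ℝ) / q| ≤ ψ q) (hge : ψ q - g q ≤ |x - (p : ℝ) / q|) :
    ∃ b, x ∈ annulusPart ψ g q p b := by
  rw [abs_le] at hle
  rcases le_abs.1 hge with hright | hleft
  · exact ⟨true, by linarith, by linarith⟩
  · exact ⟨false, by linarith, by linarith⟩

theorem mem_Icc_of_abs_sub_div_le {R : ℕ} {x M : ℝ} (hx : |x| + M ≤ R) {q : ℕ} (hq : 0 < q) {p : ℤ}
    (hpq : |x - (p : ℝ) / q| ≤ M) : p ∈ Finset.Icc (-((R * q : ℕ) : ℤ)) ((R * q : ℕ) : ℤ) := by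
  have hq' : (0 : ℝ) < q := mod_cast hq
  have hfrac : |(p : ℝ) / q| ≤ R := by
    have htri := abs_sub_abs_le_abs_sub ((p : ℝ) / q) x
    rw [abs_sub_comm] at htri
    linarith
  rw [abs_div, abs_of_pos hq', div_le_iff₀ hq'] at hfrac
  rw [Finset.mem_Icc, ← abs_le]
  exact_mod_cast hfrac

section UpperBound

variable {ψ g : ℕ → ℝ} {M s : ℝ}

/-- The indices of the parts of the annuli around the fractions in `[-R, R]`; the first component
is one less than the denominator. -/
abbrev AnnulusIndex (R : ℕ) : Type :=
  Σ q : ℕ, Finset.Icc (-((R * (q + 1) : ℕ) : ℤ)) ((R * (q + 1) : ℕ) : ℤ) × Bool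

theorem tsum_ediam_annulusPart_ne_top (R : ℕ) (hg : ∀ q, 0 < q → 0 ≤ g q) (hs : 0 ≤ s)
    (hsum : Summable fun q : ℕ => (q : ℝ) * g q ^ s) :
    ∑' i : AnnulusIndex R, Metric.ediam (annulusPart ψ g (i.1 + 1) i.2.1 i.2.2) ^ s ≠ ∞ := by
  refine ne_top_of_le_ne_top
    (((summable_nat_add_iff 1).2 hsum).mul_left (4 * R + 2 : ℝ)).tsum_ofReal_ne_top ?_
  simp only [ediam_annulusPart]
  rw [ENNReal.tsum_sigma']
  refine ENNReal.tsum_le_tsum fun q => ?_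
  have hgs := Real.rpow_nonneg (hg _ q.succ_pos) s
  have hcard : Fintype.card
      (Finset.Icc (-((R * (q + 1) : ℕ) : ℤ)) ((R * (q + 1) : ℕ) : ℤ) × Bool) =
      (2 * (R * (q + 1)) + 1) * 2 := by
    rw [Fintype.card_prod, Fintype.card_coe, Int.card_Icc, Fintype.card_bool]
    lia
  simp only [tsum_fintype, Finset.sum_const, Finset.card_univ, nsmul_eq_mul]
  rw [hcard, ENNReal.ofReal_rpow_of_nonneg (hg _ q.succ_pos) hs, ← ENNReal.ofReal_natCast,
    ← ENNReal.ofReal_mul (by positivity)]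
  refine ENNReal.ofReal_le_ofReal
    ((mul_le_mul_of_nonneg_right ?_ hgs).trans_eq (mul_assoc _ _ _))
  push_cast
  nlinarith [Nat.cast_nonneg (α := ℝ) q]

theorem mem_limsup_annulusPart (hM : ∀ q, 0 < q → ψ q ≤ M) {R : ℕ} {x : ℝ}
    (hx : x ∈ exactSet ψ g) (hxR : |x| + M ≤ R) :
    x ∈ limsup (fun i : AnnulusIndex R => annulusPart ψ g (i.1 + 1) i.2.1 i.2.2) cofinite := by
  obtain ⟨hinf, Q, hQ⟩ := hx.imp_right eventually_atTop.1
  rw [mem_limsup_iff_frequently_mem, frequently_cofinite_iff_infinite]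
  intro hfin
  refine hinf (((hfin.image fun i => ((i.2.1 : ℤ), i.1 + 1)).union
    ((finite_Icc (-((R * Q : ℕ) : ℤ)) ((R * Q : ℕ) : ℤ)).prod (finite_Iio Q))).subset ?_)
  rintro ⟨p, q⟩ ⟨hq, hpq⟩
  simp only at hq hpq
  have hp := mem_Icc_of_abs_sub_div_le hxR hq (hpq.trans (hM q hq))
  rcases lt_or_ge q Q with hqQ | hQq
  · have hmul : R * q ≤ R * Q := Nat.mul_le_mul_left R hqQ.le
    rw [Finset.mem_Icc] at hp
    exact Or.inr ⟨⟨by lia, by lia⟩, hqQ⟩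
  · obtain ⟨q, rfl⟩ := Nat.exists_eq_succ_of_ne_zero hq.ne'
    obtain ⟨b, hb⟩ := exists_mem_annulusPart hpq (hQ _ hQq p)
    exact Or.inl ⟨⟨q, ⟨p, hp⟩, b⟩, hb, rfl⟩

theorem dimH_exactSet_le (hM : ∀ q, 0 < q → ψ q ≤ M) (hg : ∀ q, 0 < q → 0 ≤ g q) (hs : 0 < s)
    (hsum : Summable fun q : ℕ => (q : ℝ) * g q ^ s) :
    dimH (exactSet ψ g) ≤ ENNReal.ofReal s := by
  lift s to ℝ≥0 using hs.le
  have hcover : exactSet ψ g ⊆ ⋃ R : ℕ,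
      limsup (fun i : AnnulusIndex R => annulusPart ψ g (i.1 + 1) i.2.1 i.2.2) cofinite :=
    fun x hx => by
      obtain ⟨R, hR⟩ := exists_nat_ge (|x| + M)
      exact mem_iUnion.2 ⟨R, mem_limsup_annulusPart hM hx hR⟩
  rw [ENNReal.ofReal_coe_nnreal]
  calc dimH (exactSet ψ g) ≤ _ := dimH_mono hcover
    _ ≤ s := by
      rw [dimH_iUnion]
      exact iSup_le fun R => dimH_limsup_cofinite_le _ (mod_cast hs)
        (tsum_ediam_annulusPart_ne_top R hg hs.le hsum)

end UpperBound

/-! ### The critical exponent -/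

/-- A bound on `q ^ 2 * g q ^ s` would give `q * g q ^ s' = O(q ^ (1 - 2 * s' / s))`. -/
theorem frequently_le_sq_mul_rpow_of_not_summable {g : ℕ → ℝ} {s s' : ℝ}
    (hg : ∀ q, 0 < q → 0 ≤ g q) (hs : 0 < s) (hss' : s < s')
    (hns : ¬ Summable fun q : ℕ => (q : ℝ) * g q ^ s') (K : ℝ) :
    ∃ᶠ q : ℕ in atTop, K ≤ (q : ℝ) ^ 2 * g q ^ s := by
  intro hbdd
  have hτ : 1 < s' / s := (one_lt_div hs).2 hss'
  have hmajorant : Summable fun q : ℕ => |K| ^ (s' / s) * (q : ℝ) ^ (1 - 2 * (s' / s)) :=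
    (Real.summable_nat_rpow.2 (by linarith)).mul_left _
  refine hns (hmajorant.of_norm_bounded_eventually_nat ?_)
  filter_upwards [hbdd, eventually_gt_atTop 0] with q hlt hq
  have hgq := hg q hq
  have hq' : (0 : ℝ) < q := mod_cast hq
  have hle : g q ^ s ≤ |K| * (q : ℝ) ^ (-2 : ℝ) := by
    rw [Real.rpow_neg hq'.le, ← div_eq_mul_inv, le_div_iff₀ (by positivity), Real.rpow_two]
    linarith [le_abs_self K]
  rw [Real.norm_of_nonneg (by positivity)]
  calc (q : ℝ) * g q ^ s' = q * (g q ^ s) ^ (s' / s) := by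
        rw [← Real.rpow_mul hgq, mul_div_cancel₀ _ hs.ne']
    _ ≤ q * (|K| * (q : ℝ) ^ (-2 : ℝ)) ^ (s' / s) := by gcongr
    _ = |K| ^ (s' / s) * ((q : ℝ) ^ (1 : ℝ) * (q : ℝ) ^ (-2 * (s' / s))) := by
        rw [Real.mul_rpow (abs_nonneg K) (by positivity), ← Real.rpow_mul hq'.le, Real.rpow_one]
        ring
    _ = |K| ^ (s' / s) * (q : ℝ) ^ (1 - 2 * (s' / s)) := by
        rw [← Real.rpow_add hq']; ring_nf

theorem eq_ofReal_csInf {d : ℝ≥0∞} {S : Set ℝ} (hS : S.Nonempty) (hpos : ∀ s ∈ S, 0 ≤ s)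
    (hle : ∀ s ∈ S, d ≤ ENNReal.ofReal s)
    (hge : ∀ s > 0, s < sInf S → ENNReal.ofReal s ≤ d) : d = ENNReal.ofReal (sInf S) := by
  obtain ⟨s₀, hs₀⟩ := hS
  lift d to ℝ≥0 using ne_top_of_le_ne_top ENNReal.ofReal_ne_top (hle s₀ hs₀)
  rw [← ENNReal.ofReal_coe_nnreal] at hle hge ⊢
  congr 1
  refine le_antisymm (le_csInf ⟨s₀, hs₀⟩ fun s hs => ?_)
    (le_of_forall_lt_imp_le_of_dense fun s hs => ?_)
  · exact (ENNReal.ofReal_le_ofReal_iff (hpos s hs)).1 (hle s hs)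
  · rcases le_or_gt s 0 with hs₀ | hs₀
    · exact hs₀.trans d.2
    · exact (ENNReal.ofReal_le_ofReal_iff d.2).1 (hge s hs₀ hs)

namespace IsAdmissible

variable {ψ g : ℕ → ℝ} (hψ : IsAdmissible ψ g)
include hψ

theorem le_one {q : ℕ} (hq : 0 < q) : ψ q ≤ 1 := by
  obtain ⟨Q, hQ, -⟩ := hψ.inv_eq q hq
  have hQ₀ : 0 < (Q : ℝ) := hQ ▸ inv_pos.2 (hψ.pos q hq)
  rw [← inv_inv (ψ q), hQ]
  exact inv_le_one_of_one_le₀ (mod_cast hQ₀)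

theorem summable_mul_width : Summable fun q : ℕ => (q : ℝ) * g q := by
  refine hψ.summable.of_nonneg_of_le (fun q => ?_) fun q => ?_ <;>
    rcases q.eq_zero_or_pos with rfl | hq
  · simp
  · exact mul_nonneg q.cast_nonneg (hψ.width_pos q hq).le
  · simp
  · exact mul_le_mul_of_nonneg_left (hψ.width_le q hq) q.cast_nonneg

theorem dimH_exactSet : dimH (exactSet ψ g) = ENNReal.ofReal
    (sInf {s : ℝ | 0 ≤ s ∧ Summable fun q : ℕ => (q : ℝ) * g q ^ s}) := by
  set S := {s : ℝ | 0 ≤ s ∧ Summable fun q : ℕ => (q : ℝ) * g q ^ s}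
  have hone : (1 : ℝ) ∈ S := ⟨zero_le_one, by simpa using hψ.summable_mul_width⟩
  have hg (q : ℕ) (hq : 0 < q) : 0 ≤ g q := (hψ.width_pos q hq).le
  have hbdd : BddBelow S := ⟨0, fun s hs => hs.1⟩
  have hpos : ∀ s ∈ S, 0 < s := by
    rintro s ⟨hs, hsum⟩
    refine hs.lt_of_ne ?_
    rintro rfl
    simp only [Real.rpow_zero, mul_one] at hsum
    exact not_tendsto_nhds_of_tendsto_atTop tendsto_natCast_atTop_atTop _ hsum.tendsto_atTop_zero
  refine eq_ofReal_csInf ⟨1, hone⟩ (fun s hs => hs.1)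
    (fun s hs => dimH_exactSet_le (fun _ => hψ.le_one) hg (hpos s hs) hs.2) fun s hs hsS => ?_
  obtain ⟨s', hss', hs'S⟩ := exists_between hsS
  exact hψ.le_dimH_exactSet hs (hsS.le.trans (csInf_le hbdd hone))
    (frequently_le_sq_mul_rpow_of_not_summable hg hs hss' fun hsum =>
      notMem_of_lt_csInf hs'S hbdd ⟨hs.le.trans hss'.le, hsum⟩)

end IsAdmissible

theorem ESet_eq_exactSet (Ψ ω : ℝ → ℝ) :
    ESet Ψ ω = exactSet (fun q : ℕ => Ψ q) (fun q : ℕ => Ψ q * ω q) := by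
  ext x
  simp only [ESet, WSet, exactSet, mem_ofPred_eq, eventually_atTop, sub_mul, one_mul,
    mul_comm (ω _)]

theorem quadraticDecay_of_antitoneOn {Ψ : ℝ → ℝ} (hΨ : ∀ q : ℝ, 0 < q → 0 < Ψ q)
    (hmono : AntitoneOn (fun q : ℝ => q ^ 2 * Ψ q) (Ioi 0)) :
    QuadraticDecay fun q : ℕ => Ψ q where
  pos q hq := hΨ q (mod_cast hq)
  sq_mul_le _ _ ha hab :=
    hmono (mem_Ioi.2 (mod_cast ha)) (mem_Ioi.2 (mod_cast ha.trans_le hab)) (mod_cast hab)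

theorem sq_mul_apply_le_of_antitoneOn {Ψ : ℝ → ℝ} {t x y : ℝ}
    (hmono : AntitoneOn (fun q : ℝ => q ^ 2 * Ψ q) (Ioi 0)) (ht : 1 ≤ t) (hx : 0 < x)
    (hxy : t * x ≤ y) (hy : 0 ≤ Ψ y) : t ^ 2 * Ψ y ≤ Ψ x := by
  have hle : x ≤ y := (le_mul_of_one_le_left hx.le ht).trans hxy
  refine le_of_mul_le_mul_left ?_ (pow_pos hx 2)
  calc x ^ 2 * (t ^ 2 * Ψ y) = (t * x) ^ 2 * Ψ y := by ring
    _ ≤ y ^ 2 * Ψ y := by gcongr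
    _ ≤ x ^ 2 * Ψ x := hmono hx (hx.trans_le hle) hle

theorem isAdmissible_of_antitoneOn {Ψ ω : ℝ → ℝ} (hΨpos : ∀ q : ℝ, 0 < q → 0 < Ψ q)
    (hωmem : ∀ q : ℝ, 0 < q → ω q ∈ Ioo (0 : ℝ) 1)
    (hmono : AntitoneOn (fun q : ℝ => q ^ 2 * Ψ q) (Ioi 0))
    (hmono' : AntitoneOn (fun q : ℝ => q ^ 2 * Ψ q * ω q) (Ioi 0))
    (hsq : SquareDivisibility Ψ) (hsum : Summable fun q : ℕ => (q : ℝ) * Ψ q)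
    (hbig : ∀ᶠ q : ℝ in atTop, 45 / (16 * Ψ q) * Ψ (1 / (8 * Ψ q)) ≤ ω q) :
    IsAdmissible (fun q : ℕ => Ψ q) fun q : ℕ => Ψ q * ω q where
  toQuadraticDecay := quadraticDecay_of_antitoneOn hΨpos hmono
  inv_eq q hq := by
    obtain ⟨k, -, hk⟩ := hsq q hq
    exact ⟨q ^ 2 * k, by push_cast; exact hk, dvd_mul_right _ _⟩
  summable := hsum
  width_pos q hq := mul_pos (hΨpos q (mod_cast hq)) (hωmem q (mod_cast hq)).1
  width_le q hq := mul_le_of_le_one_right (hΨpos q (mod_cast hq)).le (hωmem q (mod_cast hq)).2.le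
  width_anti _ _ ha hab :=
    (quadraticDecay_of_antitoneOn (Ψ := fun q => Ψ q * ω q)
      (fun q hq => mul_pos (hΨpos q hq) (hωmem q hq).1)
      (by simpa only [mul_assoc] using hmono')).le ha hab
  -- With `T = 1 / (8 * Ψ q)`, quadratic decay gives `8 ^ 2 * Ψ b ≤ Ψ T`, and
  -- `8 ^ 2 * (45 / 16) = 180`.
  eventually_mul_le := by
    filter_upwards [tendsto_natCast_atTop_atTop.eventually hbig, eventually_gt_atTop 0]
      with q hq hq₀ b hb
    have hΨq := hΨpos q (mod_cast hq₀)
    have hΨb := hΨpos b ((inv_pos.2 hΨq).trans_le hb)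
    have hdecay := sq_mul_apply_le_of_antitoneOn hmono (t := 8) (x := 1 / (8 * Ψ q))
      (by norm_num) (by positivity) (hb.trans' (by field_simp; rfl)) hΨb.le
    rw [div_mul_eq_mul_div, div_le_iff₀ (by positivity)] at hq
    linarith

theorem dimH_ESet_of_sqDiv_general {Ψ ω : ℝ → ℝ}
    (h : IsAdmissible (fun q : ℕ => Ψ q) fun q : ℕ => Ψ q * ω q) :
    dimH (ESet Ψ ω) = ENNReal.ofReal
      (sInf {s : ℝ | 0 ≤ s ∧ Summable (fun q : ℕ => (q : ℝ) * (Ψ (q : ℝ) * ω (q : ℝ)) ^ s)}) := by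
  rw [ESet_eq_exactSet, h.dimH_exactSet]

/-- **Theorem.** Suppose `q ↦ q²Ψ(q)` and `q ↦ q²Ψ(q)ω(q)` are non-increasing on `(0,∞)`,
`Ψ` satisfies the square divisibility condition, `Σ_{q≥1} qΨ(q) < ∞`, `ω(q) → 0`, `ω` maps
`(0,∞)` into `(0,1)`, and `ω(q) ≥ (45/(16Ψ(q)))·Ψ(1/(8Ψ(q)))` for all sufficiently large `q`.
Then `dim_H(E(Ψ,ω)) = inf {s ≥ 0 : Σ_{q≥1} q(Ψ(q)ω(q))^s < ∞}`. -/
theorem dimH_ESet_of_sqDiv (Ψ ω : ℝ → ℝ)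
    (hΨpos : ∀ q : ℝ, 0 < q → 0 < Ψ q)
    (hωmem : ∀ q : ℝ, 0 < q → ω q ∈ Set.Ioo (0 : ℝ) 1)
    (hmono : AntitoneOn (fun q : ℝ => q ^ 2 * Ψ q) (Set.Ioi 0))
    (hmono' : AntitoneOn (fun q : ℝ => q ^ 2 * Ψ q * ω q) (Set.Ioi 0))
    (hsq : SquareDivisibility Ψ)
    (hsum : Summable (fun q : ℕ => (q : ℝ) * Ψ (q : ℝ)))
    (hωlim : Filter.Tendsto ω Filter.atTop (nhds 0))
    (hbig : ∀ᶠ q : ℝ in Filter.atTop, 45 / (16 * Ψ q) * Ψ (1 / (8 * Ψ q)) ≤ ω q) :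
    dimH (ESet Ψ ω) = ENNReal.ofReal
      (sInf {s : ℝ | 0 ≤ s ∧ Summable (fun q : ℕ => (q : ℝ) * (Ψ (q : ℝ) * ω (q : ℝ)) ^ s)}) :=
  dimH_ESet_of_sqDiv_general
    (isAdmissible_of_antitoneOn hΨpos hωmem hmono hmono' hsq hsum hbig)
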